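/- arXiv:2104.03751 — 2 statements merged into one kernel-verified Lean document; each statement's English description precedes it below -/
import Mathlib

section
/- Let K belong to the class R and let uv be an edge of K. Then d(uv) ≥ 4; that is, lk(uv,K) has at least four vertices. -/
/-- An abstract simplicial complex on vertex set `ℕ`: a finite, downward closed
collection of nonempty finite sets of vertices. -/
structure SComplex where
  faces : Finset (Finset ℕ)
  not_empty_mem : ∅ ∉ faces
  down_closed : ∀ s ∈ faces, ∀ t ⊆ s, t ≠ ∅ → t ∈ faces

namespace SComplex

/-- The set of vertices of the complex. -/
def vertexSet (K : SComplex) : Finset ℕ := K.faces.sup id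

/-- `fnum K i` is the number of `i`-dimensional faces of `K`. -/
def fnum (K : SComplex) (i : ℕ) : ℕ := (K.faces.filter fun s => s.card = i + 1).card

/-- `g₂` for a 3-dimensional complex: `f₁ - 4 f₀ + 10`. -/
def g2 (K : SComplex) : ℤ := (K.fnum 1 : ℤ) - 4 * (K.fnum 0 : ℤ) + 10

/-- `g₂` for a 2-dimensional complex: `f₁ - 3 f₀ + 6`. -/
def g2surf (K : SComplex) : ℤ := (K.fnum 1 : ℤ) - 3 * (K.fnum 0 : ℤ) + 6

/-- Euler characteristic of a (2-dimensional) complex. -/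
def euler (K : SComplex) : ℤ := (K.fnum 0 : ℤ) - (K.fnum 1 : ℤ) + (K.fnum 2 : ℤ)

/-- The link of a face `σ`. -/
def lk (K : SComplex) (σ : Finset ℕ) : SComplex where
  faces := K.faces.filter fun γ => γ ∩ σ = ∅ ∧ γ ∪ σ ∈ K.faces
  not_empty_mem := fun h => K.not_empty_mem (Finset.mem_filter.mp h).1
  down_closed := by
    intro s hs t hts ht
    rw [Finset.mem_filter] at hs ⊢
    refine ⟨K.down_closed s hs.1 t hts ht, ?_, ?_⟩
    · have h1 : t ∩ σ ⊆ s ∩ σ := Finset.inter_subset_inter hts (Finset.Subset.refl σ)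
      rw [hs.2.1] at h1
      exact Finset.subset_empty.mp h1
    · refine K.down_closed (s ∪ σ) hs.2.2 (t ∪ σ)
        (Finset.union_subset_union hts (Finset.Subset.refl σ)) ?_
      intro hc
      exact ht (Finset.union_eq_empty.mp hc).1

/-- The (closed) star of a face `σ`. -/
def st (K : SComplex) (σ : Finset ℕ) : SComplex where
  faces := K.faces.filter fun α => α ∪ σ ∈ K.faces
  not_empty_mem := fun h => K.not_empty_mem (Finset.mem_filter.mp h).1
  down_closed := by
    intro s hs t hts ht
    rw [Finset.mem_filter] at hs ⊢
    refine ⟨K.down_closed s hs.1 t hts ht, ?_⟩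
    refine K.down_closed (s ∪ σ) hs.2 (t ∪ σ)
      (Finset.union_subset_union hts (Finset.Subset.refl σ)) ?_
    intro hc
    exact ht (Finset.union_eq_empty.mp hc).1

/-- A facet is a maximal face. -/
def IsFacet (K : SComplex) (s : Finset ℕ) : Prop :=
  s ∈ K.faces ∧ ∀ t ∈ K.faces, s ⊆ t → s = t

/-- A pure `d`-dimensional complex: all facets have `d+1` vertices. -/
def IsPure (K : SComplex) (d : ℕ) : Prop :=
  K.faces.Nonempty ∧ ∀ s, K.IsFacet s → s.card = d + 1

/-- Two facets are adjacent if they share a codimension-one face. -/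
def FacetAdj (K : SComplex) (s t : Finset ℕ) : Prop :=
  K.IsFacet s ∧ K.IsFacet t ∧ (s ∩ t).card + 1 = s.card

/-- Strong connectedness: any two facets are joined by a chain of facets, consecutive
ones sharing a codimension-one face. -/
def StronglyConnected (K : SComplex) : Prop :=
  ∀ s t, K.IsFacet s → K.IsFacet t → Relation.ReflTransGen K.FacetAdj s t

/-- Two vertices are adjacent if they span an edge. -/
def VertAdj (K : SComplex) (u v : ℕ) : Prop := ({u, v} : Finset ℕ) ∈ K.faces

/-- Connectedness of a complex (via its 1-skeleton). -/
def Conn (K : SComplex) : Prop :=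
  K.faces.Nonempty ∧
    ∀ u v, {u} ∈ K.faces → {v} ∈ K.faces → Relation.ReflTransGen K.VertAdj u v

/-- A normal `d`-pseudomanifold: pure, strongly connected, every `(d-1)`-face is in
exactly two facets, and links of faces of dimension at most `d-2` are connected. -/
def IsNormalPseudomanifold (K : SComplex) (d : ℕ) : Prop :=
  K.IsPure d ∧ K.StronglyConnected ∧
    (∀ s ∈ K.faces, s.card = d →
      (K.faces.filter fun F => F.card = d + 1 ∧ s ⊆ F).card = 2) ∧
    (∀ s ∈ K.faces, s.card ≤ d - 1 → (K.lk s).Conn)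

/-- The geometric realization `|K|`, as a subspace of `ℕ → ℝ`. -/
def realSpace (K : SComplex) : Set (ℕ → ℝ) :=
  {w | (∀ v, 0 ≤ w v) ∧ ∃ s ∈ K.faces, (∀ v, w v ≠ 0 → v ∈ s) ∧ ∑ v ∈ s, w v = 1}

/-- The link of the vertex `v` triangulates the `(d-1)`-sphere. -/
def HasSphereLink (K : SComplex) (d : ℕ) (v : ℕ) : Prop :=
  Nonempty (↥((K.lk {v}).realSpace) ≃ₜ
    ↥(Metric.sphere (0 : EuclideanSpace ℝ (Fin d)) 1))

/-- A singular vertex of a normal 3-pseudomanifold: its link is not a 2-sphere. -/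
def IsSingular (K : SComplex) (v : ℕ) : Prop :=
  {v} ∈ K.faces ∧ ¬ K.HasSphereLink 3 v

/-- `d(σ)`: the number of vertices of the link of `σ`. -/
def deg (K : SComplex) (σ : Finset ℕ) : ℕ := (K.lk σ).fnum 0

/-- The boundary complex of the simplex on vertex set `s`: all nonempty proper subsets. -/
def properFaces (s : Finset ℕ) : Finset (Finset ℕ) :=
  s.powerset.filter fun t => t ≠ ∅ ∧ t ≠ s

/-- All nonempty faces of the simplex on vertex set `s`. -/
def simplexFaces (s : Finset ℕ) : Finset (Finset ℕ) :=
  s.powerset.filter fun t => t ≠ ∅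

/-- Operation (A): a bistellar 2-move on an edge `uv` with `lk(uv) = ∂(abc)`, `abc ∉ K`. -/
def BistellarTwoMove (K K' : SComplex) : Prop :=
  ∃ u v a b c : ℕ,
    ({u, v} : Finset ℕ) ∈ K.faces ∧ u ≠ v ∧
    ({a, b, c} : Finset ℕ).card = 3 ∧
    u ∉ ({a, b, c} : Finset ℕ) ∧ v ∉ ({a, b, c} : Finset ℕ) ∧
    (K.lk {u, v}).faces = properFaces {a, b, c} ∧
    ({a, b, c} : Finset ℕ) ∉ K.faces ∧
    K'.faces = ((K.faces.filter fun α => ¬ ({u, v} : Finset ℕ) ⊆ α) ∪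
      simplexFaces (insert u {a, b, c})) ∪ simplexFaces (insert v {a, b, c})

/-- The faces of the boundary complex of a pure `d`-dimensional complex with face set `F`:
faces contained in some `(d-1)`-face lying in exactly one facet. -/
def bdryFaces (F : Finset (Finset ℕ)) (d : ℕ) : Finset (Finset ℕ) :=
  F.filter fun s => ∃ r ∈ F, s ⊆ r ∧ r.card = d ∧
    (F.filter fun t => t.card = d + 1 ∧ r ⊆ t).card = 1

/-- The faces of the cone with apex `w` over the complex with face set `F`. -/
def coneFaces (w : ℕ) (F : Finset (Finset ℕ)) : Finset (Finset ℕ) :=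
  (F ∪ F.image (insert w)) ∪ {{w}}

/-- `K₁` is obtained from the normal `d`-pseudomanifold `K` by contracting the
edge `uv` (satisfying the link condition): delete all faces containing `u` or `v`
and cone off the boundary of the result with a new vertex `w`. -/
def EdgeContractionAt (d : ℕ) (K : SComplex) (u v : ℕ) (K₁ : SComplex) : Prop :=
  ({u, v} : Finset ℕ) ∈ K.faces ∧ u ≠ v ∧
  (K.lk {u}).faces ∩ (K.lk {v}).faces = (K.lk {u, v}).faces ∧
  ∃ w, w ∉ K.vertexSet ∧
    K₁.faces = (K.faces.filter fun α => u ∉ α ∧ v ∉ α) ∪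
      coneFaces w (bdryFaces (K.faces.filter fun α => u ∉ α ∧ v ∉ α) d)

/-- Operation (B): an edge contraction in a 3-dimensional complex. -/
def EdgeContraction (K K₁ : SComplex) : Prop := ∃ u v, EdgeContractionAt 3 K u v K₁

/-- The class `R`: normal 3-pseudomanifolds with one or two singular vertices such that
(i) if `K` contains the boundary of a 3-simplex then it contains the 3-simplex and
(ii) no normal 3-pseudomanifold with smaller `g₂` is obtained from `K` by a
bistellar 2-move, an edge contraction, an edge expansion followed by a bistellar
2-move, or an edge expansion followed by an edge contraction. -/
def InClassR (K : SComplex) : Prop :=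
  K.IsNormalPseudomanifold 3 ∧
  1 ≤ {v | K.IsSingular v}.ncard ∧ {v | K.IsSingular v}.ncard ≤ 2 ∧
  (∀ s : Finset ℕ, s.card = 4 → (∀ t ∈ properFaces s, t ∈ K.faces) → s ∈ K.faces) ∧
  (∀ K' : SComplex, K'.IsNormalPseudomanifold 3 →
    (BistellarTwoMove K K' ∨ EdgeContraction K K' ∨
      (∃ M, EdgeContraction M K ∧ BistellarTwoMove M K') ∨
      (∃ M, EdgeContraction M K ∧ EdgeContraction M K')) →
    K.g2 ≤ K'.g2)



lemma rtg_symm {α : Type*} {r : α → α → Prop} (hr : ∀ x y, r x y → r y x) {x y : α}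
    (h : Relation.ReflTransGen r x y) : Relation.ReflTransGen r y x := by
  induction h with
  | refl => exact .refl
  | tail _ hab ih => exact (Relation.ReflTransGen.single (hr _ _ hab)).trans ih

/-- Combinatorial data of an edge `e` whose link is the boundary of the triangle `T`. -/
structure Flip (K : SComplex) (e T : Finset ℕ) : Prop where
  he : e.card = 2
  hT : T.card = 3
  disj : ∀ x ∈ e, x ∉ T
  up : ∀ α ∈ K.faces, e ⊆ α → α ⊆ e ∪ T
  low : ∀ α, α ⊆ e ∪ T → α ≠ ∅ → ¬ T ⊆ α → α ∈ K.faces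

/-- Every face lies in a face with four vertices. -/
def Full (K : SComplex) : Prop := ∀ s ∈ K.faces, ∃ F ∈ K.faces, F.card = 4 ∧ s ⊆ F

lemma full_of_pure (K : SComplex) (h : K.IsPure 3) : K.Full := by
  intro s hs
  obtain ⟨F, hsF, hF⟩ := K.faces.exists_le_maximal hs
  refine ⟨F, hF.1, h.2 F ⟨hF.1, ?_⟩, hsF⟩
  intro t ht hFt
  exact le_antisymm hFt (hF.2 ht hFt)

lemma facet_iff {K : SComplex} (h : K.Full) (s : Finset ℕ) :
    K.IsFacet s ↔ s ∈ K.faces ∧ s.card = 4 := by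
  constructor
  · intro hs
    obtain ⟨F, hF, hc, hsF⟩ := h s hs.1
    have := hs.2 F hF hsF
    exact ⟨hs.1, this ▸ hc⟩
  · rintro ⟨hs, hc⟩
    refine ⟨hs, fun t ht hst => ?_⟩
    obtain ⟨F, hF, hcF, htF⟩ := h t ht
    apply Finset.eq_of_subset_of_card_le hst
    have := Finset.card_le_card htF
    omega

lemma ne_empty {K : SComplex} {s : Finset ℕ} (hs : s ∈ K.faces) : s ≠ ∅ := by
  rintro rfl
  exact K.not_empty_mem hs

/-- The complex obtained by flipping the edge. -/
def flip (K : SComplex) (e T : Finset ℕ) : SComplex where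
  faces := (K.faces ∪ (e ∪ T).powerset).filter fun α => α ≠ ∅ ∧ ¬ e ⊆ α
  not_empty_mem := by simp
  down_closed := by
    intro s hs t hts ht
    simp only [Finset.mem_filter, Finset.mem_union, Finset.mem_powerset] at hs ⊢
    refine ⟨?_, ht, fun h => hs.2.2 (h.trans hts)⟩
    rcases hs.1 with h | h
    · exact Or.inl (K.down_closed s h t hts ht)
    · exact Or.inr (hts.trans h)

lemma mem_flip {K : SComplex} {e T α : Finset ℕ} :
    α ∈ (K.flip e T).faces ↔ (α ∈ K.faces ∨ α ⊆ e ∪ T) ∧ α ≠ ∅ ∧ ¬ e ⊆ α := by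
  simp only [flip, Finset.mem_filter, Finset.mem_union, Finset.mem_powerset]

section
variable {K : SComplex} {e T : Finset ℕ}

lemma Flip.cardS (h : Flip K e T) : (e ∪ T).card = 5 := by
  rw [Finset.card_union_of_disjoint (Finset.disjoint_left.mpr h.disj), h.he, h.hT]

lemma Flip.eraseT (h : Flip K e T) {x : ℕ} (hx : x ∈ T) : (e ∪ T).erase x ∈ K.faces := by
  have hc : ((e ∪ T).erase x).card = 4 := by
    rw [Finset.card_erase_of_mem (Finset.mem_union_right _ hx), h.cardS]
  refine h.low _ (Finset.erase_subset _ _) ?_ ?_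
  · intro h0; rw [h0] at hc; simp at hc
  · intro h1; simpa using h1 hx

lemma Flip.eraseE (h : Flip K e T) {x : ℕ} (hx : x ∈ e) :
    (e ∪ T).erase x ∈ (K.flip e T).faces := by
  have hc : ((e ∪ T).erase x).card = 4 := by
    rw [Finset.card_erase_of_mem (Finset.mem_union_left _ hx), h.cardS]
  refine mem_flip.2 ⟨Or.inr (Finset.erase_subset _ _), ?_, ?_⟩
  · intro h0; rw [h0] at hc; simp at hc
  · intro h1; simpa using h1 hx

lemma flip_full (h : Flip K e T) (hK : K.Full) : (K.flip e T).Full := by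
  intro s hs
  rw [mem_flip] at hs
  obtain ⟨hs, hne, hes⟩ := hs
  by_cases hS : s ⊆ e ∪ T
  · obtain ⟨x, hx, hxs⟩ := Finset.not_subset.1 hes
    refine ⟨_, h.eraseE hx, ?_, Finset.subset_erase.2 ⟨hS, hxs⟩⟩
    rw [Finset.card_erase_of_mem (Finset.mem_union_left _ hx), h.cardS]
  · have hs : s ∈ K.faces := by tauto
    obtain ⟨F, hF, hc, hsF⟩ := hK s hs
    refine ⟨F, mem_flip.2 ⟨Or.inl hF, ne_empty hF, fun heF => hS (hsF.trans (h.up F hF heF))⟩, hc, hsF⟩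

lemma adj_of (hK : K.Full) {F G t : Finset ℕ} (hF : F ∈ K.faces) (hG : G ∈ K.faces)
    (hcF : F.card = 4) (hcG : G.card = 4) (hne : F ≠ G) (ht : t.card = 3) (htF : t ⊆ F)
    (htG : t ⊆ G) : K.FacetAdj F G := by
  refine ⟨(facet_iff hK F).2 ⟨hF, hcF⟩, (facet_iff hK G).2 ⟨hG, hcG⟩, ?_⟩
  have h1 := Finset.card_le_card (Finset.subset_inter htF htG)
  have h2 : (F ∩ G).card < 4 := by
    by_contra hcon
    have e1 := Finset.eq_of_subset_of_card_le (Finset.inter_subset_left (s₁ := F) (s₂ := G)) (by omega)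
    have e2 := Finset.eq_of_subset_of_card_le (Finset.inter_subset_right (s₁ := F) (s₂ := G)) (by omega)
    exact hne (e1.symm.trans e2)
  omega

lemma adj_symm (hK : K.Full) {F G : Finset ℕ} (h : K.FacetAdj F G) : K.FacetAdj G F := by
  have h1 := (facet_iff hK F).1 h.1
  have h2 := (facet_iff hK G).1 h.2.1
  refine ⟨h.2.1, h.1, ?_⟩
  rw [Finset.inter_comm]
  have := h.2.2
  omega

lemma reach_of (hK : K.Full) {F G t : Finset ℕ} (hF : F ∈ K.faces) (hG : G ∈ K.faces)
    (hcF : F.card = 4) (hcG : G.card = 4) (ht : t.card = 3) (htF : t ⊆ F)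
    (htG : t ⊆ G) : Relation.ReflTransGen K.FacetAdj F G := by
  by_cases hne : F = G
  · subst hne; exact .refl
  · exact .single (adj_of hK hF hG hcF hcG hne ht htF htG)

/-- Facets inside `e ∪ T` are mutually reachable in the flipped complex. -/
lemma flip_reachE (h : Flip K e T) (hK : K.Full) {x y : ℕ} (hx : x ∈ e) (hy : y ∈ e) :
    Relation.ReflTransGen (K.flip e T).FacetAdj ((e ∪ T).erase x) ((e ∪ T).erase y) := by
  have hc : ∀ x ∈ e, ((e ∪ T).erase x).card = 4 := fun x hx => by
    rw [Finset.card_erase_of_mem (Finset.mem_union_left _ hx), h.cardS]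
  refine reach_of (flip_full h hK) (h.eraseE hx) (h.eraseE hy) (hc x hx) (hc y hy) h.hT ?_ ?_
  · exact Finset.subset_erase.2 ⟨Finset.subset_union_right, h.disj x hx⟩
  · exact Finset.subset_erase.2 ⟨Finset.subset_union_right, h.disj y hy⟩

lemma flip_reach_step (h : Flip K e T) (hK : K.Full) {p : ℕ} (hp : p ∈ e) {F G : Finset ℕ}
    (hFG : K.FacetAdj F G) (hF : ¬ e ⊆ F) (hG : e ⊆ G) :
    Relation.ReflTransGen (K.flip e T).FacetAdj F ((e ∪ T).erase p) := by
  have h1 := (facet_iff hK F).1 hFG.1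
  have h2 := (facet_iff hK G).1 hFG.2.1
  have h3 : (F ∩ G).card = 3 := by have := hFG.2.2; omega
  obtain ⟨q, hq, hqF⟩ := Finset.not_subset.1 hF
  refine Relation.ReflTransGen.trans ?_ (flip_reachE h hK hq hp)
  refine reach_of (flip_full h hK) (mem_flip.2 ⟨Or.inl h1.1, ne_empty h1.1, hF⟩) (h.eraseE hq) h1.2
    ?_ h3 Finset.inter_subset_left ?_
  · rw [Finset.card_erase_of_mem (Finset.mem_union_left _ hq), h.cardS]
  · refine Finset.subset_erase.2 ⟨Finset.inter_subset_right.trans (h.up G h2.1 hG), ?_⟩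
    simp [hqF]

lemma flip_strong (h : Flip K e T) (hK : K.Full) (hs : K.StronglyConnected) :
    (K.flip e T).StronglyConnected := by
  have hK' := flip_full h hK
  have hsymm : ∀ F G, (K.flip e T).FacetAdj F G → (K.flip e T).FacetAdj G F :=
    fun _ _ h => adj_symm hK' h
  obtain ⟨p, hp⟩ : e.Nonempty := by rw [← Finset.card_pos, h.he]; norm_num
  obtain ⟨x, hx⟩ : T.Nonempty := by rw [← Finset.card_pos, h.hT]; norm_num
  have hcx : ((e ∪ T).erase x).card = 4 := by
    rw [Finset.card_erase_of_mem (Finset.mem_union_right _ hx), h.cardS]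
  have hex : e ⊆ (e ∪ T).erase x := Finset.subset_erase.2
    ⟨Finset.subset_union_left, fun hxe => h.disj x hxe hx⟩
  let r : Finset ℕ → Finset ℕ := fun F => if e ⊆ F then (e ∪ T).erase p else F
  have hr : ∀ F G, Relation.ReflTransGen K.FacetAdj F G →
      Relation.ReflTransGen (K.flip e T).FacetAdj (r F) (r G) := by
    intro F G hFG
    induction hFG with
    | refl => exact .refl
    | tail _ hab ih =>
      rename_i A B _
      refine ih.trans ?_
      simp only [r]
      split_ifs with h1 h2 h2
      · exact .refl
      · exact rtg_symm hsymm (flip_reach_step h hK hp (adj_symm hK hab) h2 h1)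
      · exact flip_reach_step h hK hp hab h1 h2
      · have ha := (facet_iff hK A).1 hab.1
        have hb := (facet_iff hK B).1 hab.2.1
        refine .single ⟨(facet_iff hK' A).2 ⟨mem_flip.2 ⟨Or.inl ha.1, ne_empty ha.1, h1⟩, ha.2⟩,
          (facet_iff hK' B).2 ⟨mem_flip.2 ⟨Or.inl hb.1, ne_empty hb.1, h2⟩, hb.2⟩, hab.2.2⟩
  have key : ∀ F, (K.flip e T).IsFacet F → ∃ F0, K.IsFacet F0 ∧
      Relation.ReflTransGen (K.flip e T).FacetAdj F (r F0) := by
    intro F hF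
    have hF1 := (facet_iff hK' F).1 hF
    have hF2 := mem_flip.1 hF1.1
    by_cases hFK : F ∈ K.faces
    · refine ⟨F, (facet_iff hK F).2 ⟨hFK, hF1.2⟩, ?_⟩
      simp only [r, if_neg hF2.2.2]
      exact .refl
    · refine ⟨(e ∪ T).erase x, (facet_iff hK _).2 ⟨h.eraseT hx, hcx⟩, ?_⟩
      simp only [r, if_pos hex]
      obtain ⟨q, hq, hqF⟩ := Finset.not_subset.1 hF2.2.2
      have : F = (e ∪ T).erase q := by
        apply Finset.eq_of_subset_of_card_le
        · exact Finset.subset_erase.2 ⟨by tauto, hqF⟩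
        · rw [Finset.card_erase_of_mem (Finset.mem_union_left _ hq), h.cardS]; omega
      rw [this]
      exact flip_reachE h hK hq hp
  intro F G hF hG
  obtain ⟨F0, hF0, hF1⟩ := key F hF
  obtain ⟨G0, hG0, hG1⟩ := key G hG
  exact hF1.trans ((hr F0 G0 (hs F0 G0 hF0 hG0)).trans (rtg_symm hsymm hG1))

lemma Flip.mem_of_not_sub (h : Flip K e T) {α : Finset ℕ} (hα : ¬ α ⊆ e ∪ T) :
    α ∈ (K.flip e T).faces ↔ α ∈ K.faces := by
  rw [mem_flip]
  constructor
  · tauto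
  · intro h1
    exact ⟨Or.inl h1, ne_empty h1, fun h2 => hα (h.up α h1 h2)⟩

lemma flip_two (h : Flip K e T) (hTK : T ∉ K.faces)
    (h2 : ∀ s ∈ K.faces, s.card = 3 →
      (K.faces.filter fun F => F.card = 3 + 1 ∧ s ⊆ F).card = 2) :
    ∀ s ∈ (K.flip e T).faces, s.card = 3 →
      ((K.flip e T).faces.filter fun F => F.card = 3 + 1 ∧ s ⊆ F).card = 2 := by
  intro t ht hc
  by_cases htS : t ⊆ e ∪ T
  swap
  · rw [← h2 t ((h.mem_of_not_sub htS).1 ht) hc]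
    congr 1
    ext F
    simp only [Finset.mem_filter, and_congr_left_iff]
    intro hF
    exact h.mem_of_not_sub (fun hFS => htS (hF.2.trans hFS))
  · obtain ⟨_, hne, het⟩ := mem_flip.1 ht
    have hcd : ((e ∪ T) \ t).card = 2 := by
      rw [Finset.card_sdiff_of_subset htS, h.cardS, hc]
    obtain ⟨x, hx, hxt⟩ := Finset.not_subset.1 het
    have hxS : x ∈ e ∪ T := Finset.mem_union_left _ hx
    obtain ⟨y, hy⟩ : ∃ y, (e ∪ T) \ t = {x, y} ∧ x ≠ y := by
      obtain ⟨a, b, hab, hh⟩ := Finset.card_eq_two.1 hcd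
      have : x ∈ ({a, b} : Finset ℕ) := by rw [← hh]; simp [hx, hxt]
      simp only [Finset.mem_insert, Finset.mem_singleton] at this
      rcases this with rfl | rfl
      · exact ⟨b, hh, hab⟩
      · exact ⟨a, by rw [hh, Finset.pair_comm], hab.symm⟩
    obtain ⟨hy, hxy⟩ := hy
    have hyd : y ∈ (e ∪ T) \ t := by rw [hy]; simp
    have hyS := (Finset.mem_sdiff.1 hyd).1
    have hyt := (Finset.mem_sdiff.1 hyd).2
    have hc4 : ∀ z ∈ e ∪ T, ((e ∪ T).erase z).card = 4 := fun z hz => by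
      rw [Finset.card_erase_of_mem hz, h.cardS]
    -- four-sets between t and S
    have four : ∀ F : Finset ℕ, F.card = 4 → t ⊆ F → F ⊆ e ∪ T →
        F = (e ∪ T).erase x ∨ F = (e ∪ T).erase y := by
      intro F hF htF hFS
      have : ∃ z ∈ (e ∪ T), z ∉ F := by
        by_contra hcon
        push Not at hcon
        have := Finset.card_le_card (show e ∪ T ⊆ F from hcon)
        rw [h.cardS] at this; omega
      obtain ⟨z, hz, hzF⟩ := this
      have hFe : F = (e ∪ T).erase z := by
        apply Finset.eq_of_subset_of_card_le (Finset.subset_erase.2 ⟨hFS, hzF⟩)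
        rw [hc4 z hz]; omega
      have : z ∈ ({x, y} : Finset ℕ) := by
        rw [← hy]; exact Finset.mem_sdiff.2 ⟨hz, fun hzt => hzF (htF hzt)⟩
      simp only [Finset.mem_insert, Finset.mem_singleton] at this
      rcases this with rfl | rfl
      · exact Or.inl hFe
      · exact Or.inr hFe
    have htx : t ⊆ (e ∪ T).erase x := Finset.subset_erase.2 ⟨htS, hxt⟩
    have hty : t ⊆ (e ∪ T).erase y := Finset.subset_erase.2 ⟨htS, hyt⟩
    have hexy : (e ∪ T).erase x ≠ (e ∪ T).erase y := by
      intro hh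
      have : y ∈ (e ∪ T).erase x := Finset.mem_erase.2 ⟨hxy.symm, hyS⟩
      rw [hh] at this; simp at this
    by_cases hye : y ∈ e
    · -- t = T
      have htT : t = T := by
        apply Finset.eq_of_subset_of_card_le
        · intro z hz
          have hexy : e = {x, y} := by
            symm
            apply Finset.eq_of_subset_of_card_le
            · intro w hw
              simp only [Finset.mem_insert, Finset.mem_singleton] at hw
              rcases hw with rfl | rfl <;> assumption
            · rw [h.he, Finset.card_pair hxy]
          rcases Finset.mem_union.1 (htS hz) with h1 | h1
          · exfalso
            rw [hexy, ← hy] at h1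
            exact (Finset.mem_sdiff.1 h1).2 hz
          · exact h1
        · rw [h.hT, hc]
      have : ((K.flip e T).faces.filter fun F => F.card = 3 + 1 ∧ t ⊆ F) =
          {(e ∪ T).erase x, (e ∪ T).erase y} := by
        ext F
        simp only [Finset.mem_filter, Finset.mem_insert, Finset.mem_singleton]
        constructor
        · rintro ⟨hF, hF4, htF⟩
          refine four F hF4 htF ?_
          rcases (mem_flip.1 hF).1 with h1 | h1
          · exact absurd (K.down_closed F h1 T (htT ▸ htF) (htT ▸ hne)) hTK
          · exact h1
        · rintro (rfl | rfl)
          · exact ⟨h.eraseE hx, hc4 x hxS, htx⟩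
          · exact ⟨h.eraseE hye, hc4 y hyS, hty⟩
      rw [this, Finset.card_pair hexy]
    · have hyT : y ∈ T := (Finset.mem_union.1 hyS).resolve_left hye
      have htK : t ∈ K.faces := h.low t htS hne (fun hTt => hyt (hTt hyT))
      have hxK : (e ∪ T).erase x ∉ K.faces := by
        intro hh
        refine hTK (K.down_closed _ hh T (Finset.subset_erase.2 ⟨Finset.subset_union_right, h.disj x hx⟩) ?_)
        intro h0; have := h.hT; rw [h0] at this; simp at this
      have hey : e ⊆ (e ∪ T).erase y := Finset.subset_erase.2 ⟨Finset.subset_union_left, hye⟩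
      rw [← h2 t htK hc]
      have : ((K.flip e T).faces.filter fun F => F.card = 3 + 1 ∧ t ⊆ F) =
          insert ((e ∪ T).erase x)
            ((K.faces.filter fun F => F.card = 3 + 1 ∧ t ⊆ F).erase ((e ∪ T).erase y)) := by
        ext F
        simp only [Finset.mem_filter, Finset.mem_insert, Finset.mem_erase]
        constructor
        · rintro ⟨hF, hF4, htF⟩
          have hF' := mem_flip.1 hF
          by_cases hFS : F ⊆ e ∪ T
          · rcases four F hF4 htF hFS with h1 | h1
            · exact Or.inl h1
            · exact absurd (h1 ▸ hey) hF'.2.2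
          · refine Or.inr ⟨fun h1 => hFS (h1 ▸ Finset.erase_subset _ _), by tauto, hF4, htF⟩
        · rintro (rfl | ⟨h1, h3, h4, h5⟩)
          · exact ⟨h.eraseE hx, hc4 x hxS, htx⟩
          · refine ⟨mem_flip.2 ⟨Or.inl h3, ne_empty h3, fun heF => ?_⟩, h4, h5⟩
            rcases four F h4 h5 (h.up F h3 heF) with h6 | h6
            · exact hxK (h6 ▸ h3)
            · exact h1 h6
      rw [this, Finset.card_insert_of_notMem, Finset.card_erase_of_mem, h2 t htK hc]
      · simp only [Finset.mem_filter]
        exact ⟨h.eraseT hyT, hc4 y hyS, hty⟩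
      · simp [hxK]

lemma mem_lk {s γ : Finset ℕ} : γ ∈ (K.lk s).faces ↔ γ ∈ K.faces ∧ γ ∩ s = ∅ ∧ γ ∪ s ∈ K.faces := by
  simp [lk]

lemma mem_lk_single {s : Finset ℕ} {x : ℕ} :
    {x} ∈ (K.lk s).faces ↔ x ∉ s ∧ insert x s ∈ K.faces := by
  rw [mem_lk]
  constructor
  · rintro ⟨_, h1, h2⟩
    refine ⟨fun hx => ?_, by rwa [Finset.insert_eq]⟩
    have : x ∈ ({x} ∩ s : Finset ℕ) := by simp [hx]
    rw [h1] at this; simp at this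
  · rintro ⟨h1, h2⟩
    refine ⟨K.down_closed _ h2 _ (by simp) (by simp), by simp [h1], by rwa [← Finset.insert_eq]⟩

lemma lk_adj {s : Finset ℕ} {x y : ℕ} :
    (K.lk s).VertAdj x y ↔ x ∉ s ∧ y ∉ s ∧ insert x (insert y s) ∈ K.faces := by
  unfold VertAdj
  rw [mem_lk]
  have e1 : ({x, y} ∪ s : Finset ℕ) = insert x (insert y s) := by ext z; simp
  rw [e1]
  constructor
  · rintro ⟨_, h1, h2⟩
    rw [← Finset.disjoint_iff_inter_eq_empty, Finset.disjoint_left] at h1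
    exact ⟨h1 (by simp), h1 (by simp), h2⟩
  · rintro ⟨h1, h2, h3⟩
    refine ⟨K.down_closed _ h3 _ ?_ (by simp), ?_, h3⟩
    · intro z hz; simp at hz ⊢; tauto
    · rw [← Finset.disjoint_iff_inter_eq_empty, Finset.disjoint_left]
      intro z hz; simp at hz; rcases hz with rfl | rfl <;> assumption

lemma lk_adj_symm {s : Finset ℕ} {x y : ℕ} (h : (K.lk s).VertAdj x y) : (K.lk s).VertAdj y x := by
  unfold VertAdj at *
  rwa [Finset.pair_comm]

lemma flip_lk (h : Flip K e T) (hK : K.Full)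
    (hl : ∀ s ∈ K.faces, s.card ≤ 3 - 1 → (K.lk s).Conn) :
    ∀ s ∈ (K.flip e T).faces, s.card ≤ 3 - 1 → ((K.flip e T).lk s).Conn := by
  intro s hs hc
  have hK' := flip_full h hK
  obtain ⟨_, hne, hes⟩ := mem_flip.1 hs
  have hTs : ¬ T ⊆ s := by
    intro hh; have := Finset.card_le_card hh; have := h.hT; omega
  have hsK : s ∈ K.faces := by
    by_cases hS : s ⊆ e ∪ T
    · exact h.low s hS hne hTs
    · tauto
  have hconn := (hl s hsK hc).2
  constructor
  · obtain ⟨F, hF, hF4, hsF⟩ := hK' s hs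
    obtain ⟨x, hx, hxs⟩ := Finset.exists_mem_notMem_of_card_lt_card (show s.card < F.card by omega)
    refine ⟨{x}, mem_lk_single.2 ⟨hxs, (K.flip e T).down_closed F hF _ ?_ (by simp)⟩⟩
    exact Finset.insert_subset hx hsF
  by_cases hS : s ⊆ e ∪ T
  swap
  · intro x y hx hy
    have hsup : ∀ α, s ⊆ α → (α ∈ (K.flip e T).faces ↔ α ∈ K.faces) := fun α hα =>
      h.mem_of_not_sub (fun h1 => hS (hα.trans h1))
    rw [mem_lk_single, hsup _ (Finset.subset_insert _ _), ← mem_lk_single] at hx hy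
    refine Relation.ReflTransGen.mono ?_ _ _ (hconn x y hx hy)
    intro a b hab
    rw [lk_adj] at hab ⊢
    rwa [hsup]
    exact (Finset.subset_insert _ _).trans (Finset.subset_insert _ _)
  · have hsymm : ∀ x y, ((K.flip e T).lk s).VertAdj x y → ((K.flip e T).lk s).VertAdj y x :=
      fun _ _ h => lk_adj_symm h
    obtain ⟨p, hpT, hps⟩ := Finset.not_subset.1 hTs
    have hpe : p ∉ e := fun hh => h.disj p hh hpT
    obtain ⟨q, hq, hqs⟩ := Finset.exists_mem_notMem_of_card_lt_card
      (show s.card < ((e ∪ T).erase p).card by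
        rw [Finset.card_erase_of_mem (Finset.mem_union_right _ hpT), h.cardS]; omega)
    have hqS : q ∈ e ∪ T := Finset.mem_of_mem_erase hq
    have hqK : {q} ∈ (K.lk s).faces := by
      refine mem_lk_single.2 ⟨hqs, K.down_closed _ (h.eraseT hpT) _ ?_ (by simp)⟩
      exact Finset.insert_subset hq (Finset.subset_erase.2 ⟨hS, hps⟩)
    have base : ∀ x ∈ e ∪ T, {x} ∈ ((K.flip e T).lk s).faces →
        ((K.flip e T).lk s).VertAdj x p := by
      intro x hx hxl
      obtain ⟨hxs, hxl⟩ := mem_lk_single.1 hxl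
      refine lk_adj.2 ⟨hxs, hps, mem_flip.2 ⟨Or.inr ?_, by simp, ?_⟩⟩
      · exact Finset.insert_subset hx (Finset.insert_subset (Finset.mem_union_right _ hpT) hS)
      · intro hsub
        refine (mem_flip.1 hxl).2.2 ?_
        rw [Finset.insert_comm] at hsub
        exact (Finset.subset_insert_iff_of_notMem hpe).1 hsub
    let r : ℕ → ℕ := fun x => if x ∈ e ∪ T then p else x
    have step : ∀ x y, x ∈ e ∪ T → y ∉ e ∪ T → (K.lk s).VertAdj x y →
        Relation.ReflTransGen ((K.flip e T).lk s).VertAdj p y := by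
      intro x y hx hy hxy
      rw [lk_adj] at hxy
      have hm : insert x (insert y s) ∈ (K.flip e T).faces := by
        rw [h.mem_of_not_sub]
        · exact hxy.2.2
        · intro hh; exact hy (hh (by simp))
      have h1 : ((K.flip e T).lk s).VertAdj x y := lk_adj.2 ⟨hxy.1, hxy.2.1, hm⟩
      have h2 : {x} ∈ ((K.flip e T).lk s).faces := by
        refine mem_lk_single.2 ⟨hxy.1, (K.flip e T).down_closed _ hm _ ?_ (by simp)⟩
        exact Finset.insert_subset_insert _ (Finset.subset_insert _ _)
      exact (Relation.ReflTransGen.single (lk_adj_symm (base x hx h2))).tail h1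
    have hr : ∀ x y, Relation.ReflTransGen (K.lk s).VertAdj x y →
        Relation.ReflTransGen ((K.flip e T).lk s).VertAdj (r x) (r y) := by
      intro x y hxy
      induction hxy with
      | refl => exact .refl
      | tail _ hab ih =>
        rename_i a b _
        refine ih.trans ?_
        simp only [r]
        split_ifs with h1 h2 h2
        · exact .refl
        · exact step a b h1 h2 hab
        · exact rtg_symm hsymm (step b a h2 h1 (lk_adj_symm hab))
        · rw [lk_adj] at hab
          refine .single (lk_adj.2 ⟨hab.1, hab.2.1, ?_⟩)
          rw [h.mem_of_not_sub]
          · exact hab.2.2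
          · intro hh; exact h1 (hh (by simp))
    have key : ∀ x, {x} ∈ ((K.flip e T).lk s).faces → ∃ x0, {x0} ∈ (K.lk s).faces ∧
        Relation.ReflTransGen ((K.flip e T).lk s).VertAdj x (r x0) := by
      intro x hx
      by_cases hxS : x ∈ e ∪ T
      · refine ⟨q, hqK, ?_⟩
        simp only [r, if_pos hqS]
        exact .single (base x hxS hx)
      · refine ⟨x, ?_, ?_⟩
        · rw [mem_lk_single] at hx ⊢
          rwa [h.mem_of_not_sub] at hx
          intro hh; exact hxS (hh (by simp))
        · simp only [r, if_neg hxS]; exact .refl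
    intro x y hx hy
    obtain ⟨x0, hx0, hx1⟩ := key x hx
    obtain ⟨y0, hy0, hy1⟩ := key y hy
    exact hx1.trans ((hr x0 y0 (hconn x0 y0 hx0 hy0)).trans (rtg_symm hsymm hy1))

lemma flip_normal (h : Flip K e T) (hTK : T ∉ K.faces) (hK : K.IsNormalPseudomanifold 3) :
    (K.flip e T).IsNormalPseudomanifold 3 := by
  obtain ⟨h1, h2, h3, h4⟩ := hK
  have hf := full_of_pure K h1
  have hf' := flip_full h hf
  refine ⟨⟨?_, ?_⟩, flip_strong h hf h2, flip_two h hTK h3, flip_lk h hf h4⟩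
  · obtain ⟨p, hp⟩ : e.Nonempty := by rw [← Finset.card_pos, h.he]; norm_num
    exact ⟨_, h.eraseE hp⟩
  · intro s hs
    exact ((facet_iff hf' s).1 hs).2

lemma flip_g2 (h : Flip K e T) : (K.flip e T).g2 < K.g2 := by
  have hsub : ∀ α ∈ (K.flip e T).faces, α.card ≤ 2 → α ∈ K.faces := by
    intro α hα hc
    rw [mem_flip] at hα
    rcases hα.1 with h1 | h1
    · exact h1
    · refine h.low α h1 hα.2.1 ?_
      intro hh; have := Finset.card_le_card hh; have := h.hT; omega
  have h0 : (K.flip e T).fnum 0 = K.fnum 0 := by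
    unfold fnum
    congr 1
    ext α
    simp only [Finset.mem_filter, and_congr_left_iff]
    intro hc
    refine ⟨fun hα => hsub α hα (by omega), fun hα => mem_flip.2 ⟨Or.inl hα, ne_empty hα, ?_⟩⟩
    intro hh; have := Finset.card_le_card hh; have := h.he; omega
  have h1 : (K.flip e T).fnum 1 < K.fnum 1 := by
    unfold fnum
    apply Finset.card_lt_card
    rw [Finset.ssubset_iff_of_subset]
    · refine ⟨e, ?_, ?_⟩
      · simp only [Finset.mem_filter]
        refine ⟨h.low e Finset.subset_union_left ?_ ?_, h.he⟩
        · intro h0; have := h.he; rw [h0] at this; simp at this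
        · intro hh; have := Finset.card_le_card hh; have := h.hT; have := h.he; omega
      · simp [mem_flip]
    · intro α
      simp only [Finset.mem_filter]
      rintro ⟨h1, h2⟩
      exact ⟨hsub α h1 (by omega), h2⟩
  unfold g2
  rw [h0]
  have : ((K.flip e T).fnum 1 : ℤ) < K.fnum 1 := by exact_mod_cast h1
  linarith

lemma flip_move {u v : ℕ} (hne : u ≠ v) (h : Flip K {u, v} T) (hTK : T ∉ K.faces) :
    BistellarTwoMove K (K.flip {u, v} T) := by
  obtain ⟨a, b, c, _, _, _, hT⟩ := Finset.card_eq_three.1 h.hT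
  refine ⟨u, v, a, b, c, ?_⟩
  rw [← hT]
  have hu := h.disj u (by simp)
  have hv := h.disj v (by simp)
  refine ⟨?_, hne, h.hT, hu, hv, ?_, hTK, ?_⟩
  · refine h.low _ Finset.subset_union_left (by simp) ?_
    intro hh; have := Finset.card_le_card hh; have := h.hT; have := h.he; omega
  · ext γ
    simp only [mem_lk, properFaces, Finset.mem_filter, Finset.mem_powerset]
    constructor
    · rintro ⟨h1, h2, h3⟩
      refine ⟨?_, ne_empty h1, fun hh => hTK (hh ▸ h1)⟩
      intro z hz
      have := h.up _ h3 Finset.subset_union_right (Finset.mem_union_left _ hz)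
      rw [← Finset.disjoint_iff_inter_eq_empty, Finset.disjoint_left] at h2
      exact (Finset.mem_union.1 this).resolve_left (h2 hz)
    · rintro ⟨h1, h2, h3⟩
      have hTγ : ¬ T ⊆ γ := fun hh => h3 (h1.antisymm hh)
      refine ⟨h.low _ (h1.trans Finset.subset_union_right) h2 hTγ, ?_, h.low _ ?_ ?_ ?_⟩
      · rw [← Finset.disjoint_iff_inter_eq_empty, Finset.disjoint_left]
        intro z hz hz2
        exact h.disj z hz2 (h1 hz)
      · exact Finset.union_subset (h1.trans Finset.subset_union_right) Finset.subset_union_left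
      · simp
      · intro hh
        refine hTγ fun z hz => (Finset.mem_union.1 (hh hz)).resolve_right fun hz2 => h.disj z hz2 hz
  · ext α
    simp only [mem_flip, simplexFaces, Finset.mem_union, Finset.mem_filter, Finset.mem_powerset]
    have hsub : ∀ x y : ℕ, ({x, y} : Finset ℕ) = {u, v} → (α ⊆ insert x T ↔ α ⊆ {u, v} ∪ T ∧ (y ∉ α ∨ y = x)) := by
      intro x y hxy
      have hyT : y ∉ T := h.disj y (by rw [← hxy]; simp)
      rw [← hxy]
      constructor
      · intro h1
        refine ⟨fun z hz => ?_, ?_⟩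
        · have := h1 hz; simp at this ⊢; tauto
        · by_cases hy : y ∈ α
          · have := h1 hy; simp at this; tauto
          · exact Or.inl hy
      · rintro ⟨h1, h2⟩ z hz
        have := h1 hz
        simp at this ⊢
        rcases this with h3 | h3 | h3
        · tauto
        · subst h3; tauto
        · tauto
    have e1 := hsub u v rfl
    have e2 := hsub v u (Finset.pair_comm _ _)
    have e3 : ({u, v} : Finset ℕ) ⊆ α ↔ u ∈ α ∧ v ∈ α := by
      simp [Finset.insert_subset_iff]
    rw [e1, e2, e3]
    have := ne_empty (K := K) (s := α)
    simp only [hne, hne.symm, or_false]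
    grind

end

/-- Minimum of the three coordinates and zero. -/
noncomputable def mn (x y z : ℝ) : ℝ := min (min x y) (min z 0)

lemma mn_spec (x y z : ℝ) : mn x y z ≤ x ∧ mn x y z ≤ y ∧ mn x y z ≤ z ∧ mn x y z ≤ 0 ∧
    (mn x y z = x ∨ mn x y z = y ∨ mn x y z = z ∨ mn x y z = 0) := by
  unfold mn
  grind

lemma mn_eq {x y z k : ℝ} (h1 : k ≤ x) (h2 : k ≤ y) (h3 : k ≤ z) (h4 : k ≤ 0)
    (h : x = k ∨ y = k ∨ z = k ∨ 0 = k) : mn x y z = k := by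
  unfold mn
  grind

lemma mem_realSpace_iff {L : SComplex} {a b c d : ℕ} (hab : a ≠ b) (hac : a ≠ c) (had : a ≠ d)
    (hbc : b ≠ c) (hbd : b ≠ d) (hcd : c ≠ d) (hL : L.faces = properFaces {a, b, c, d}) (w : ℕ → ℝ) :
    w ∈ L.realSpace ↔ (∀ v, 0 ≤ w v) ∧ (∀ v, v ∉ ({a, b, c, d} : Finset ℕ) → w v = 0) ∧
      w a + w b + w c + w d = 1 ∧ (w a = 0 ∨ w b = 0 ∨ w c = 0 ∨ w d = 0) := by
  have hsum : ∑ v ∈ ({a, b, c, d} : Finset ℕ), w v = w a + w b + w c + w d := by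
    rw [Finset.sum_insert (by simp [*]), Finset.sum_insert (by simp [*]),
      Finset.sum_insert (by simp [*]), Finset.sum_singleton]
    ring
  unfold realSpace
  rw [Set.mem_ofPred_eq, hL]
  refine and_congr_right fun hpos => ?_
  simp only [properFaces, Finset.mem_filter, Finset.mem_powerset]
  constructor
  · rintro ⟨s, ⟨hs, hne, hns⟩, h0, h1⟩
    refine ⟨fun v hv => ?_, ?_, ?_⟩
    · by_contra hh; exact hv (hs (h0 v hh))
    · rw [← hsum, ← h1]
      symm
      apply Finset.sum_subset hs
      intro v _ hv
      by_contra hh; exact hv (h0 v hh)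
    · by_contra hcon
      push Not at hcon
      apply hns
      apply hs.antisymm
      intro v hv
      simp only [Finset.mem_insert, Finset.mem_singleton] at hv
      apply h0
      rcases hv with rfl | rfl | rfl | rfl <;> tauto
  · rintro ⟨h0, h1, h2⟩
    obtain ⟨x, hx, hwx⟩ : ∃ x ∈ ({a, b, c, d} : Finset ℕ), w x = 0 := by
      rcases h2 with h | h | h | h
      · exact ⟨a, by simp, h⟩
      · exact ⟨b, by simp, h⟩
      · exact ⟨c, by simp, h⟩
      · exact ⟨d, by simp, h⟩
    have hs1 : ∑ v ∈ ({a, b, c, d} : Finset ℕ).erase x, w v = 1 := by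
      rw [← h1, ← hsum, ← Finset.add_sum_erase _ _ hx, hwx, zero_add]
    refine ⟨({a, b, c, d} : Finset ℕ).erase x, ⟨Finset.erase_subset _ _, ?_, ?_⟩, ?_, hs1⟩
    · intro he; rw [he] at hs1; simp at hs1
    · intro he; rw [← he] at hx; simp at hx
    · intro v hv
      refine Finset.mem_erase.2 ⟨fun hvx => hv (hvx ▸ hwx), ?_⟩
      by_contra hh; exact hv (h0 v hh)

/-- Unnormalised map to three-space. -/
noncomputable def gmap (a b c d : ℕ) (w : ℕ → ℝ) : EuclideanSpace ℝ (Fin 3) :=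
  WithLp.toLp 2 ![w a - w d, w b - w d, w c - w d]

/-- Inverse map. -/
noncomputable def imap (a b c d : ℕ) (y : EuclideanSpace ℝ (Fin 3)) : ℕ → ℝ := fun v =>
  (if v = a then y 0 - mn (y 0) (y 1) (y 2) else if v = b then y 1 - mn (y 0) (y 1) (y 2) else
    if v = c then y 2 - mn (y 0) (y 1) (y 2) else if v = d then - mn (y 0) (y 1) (y 2) else 0) /
    (y 0 + y 1 + y 2 - 4 * mn (y 0) (y 1) (y 2))

lemma sigma_pos (y : EuclideanSpace ℝ (Fin 3)) (hy : y ≠ 0) :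
    0 < y 0 + y 1 + y 2 - 4 * mn (y 0) (y 1) (y 2) := by
  obtain ⟨h1, h2, h3, h4, _⟩ := mn_spec (y 0) (y 1) (y 2)
  by_contra hcon
  apply hy
  have e0 : y 0 = 0 := by linarith
  have e1 : y 1 = 0 := by linarith
  have e2 : y 2 = 0 := by linarith
  ext i
  fin_cases i <;> simp [e0, e1, e2]

lemma gmap_cont (a b c d : ℕ) : Continuous (gmap a b c d) := by
  unfold gmap
  apply (PiLp.continuous_toLp 2 _).comp
  refine continuous_pi fun i => ?_
  fin_cases i <;> simp <;> fun_prop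

lemma sphere_of_tetra {L : SComplex} {a b c d : ℕ} (hab : a ≠ b) (hac : a ≠ c) (had : a ≠ d)
    (hbc : b ≠ c) (hbd : b ≠ d) (hcd : c ≠ d) (hL : L.faces = properFaces {a, b, c, d}) :
    Nonempty (↥(L.realSpace) ≃ₜ ↥(Metric.sphere (0 : EuclideanSpace ℝ (Fin 3)) 1)) := by
  have hmem := mem_realSpace_iff hab hac had hbc hbd hcd hL
  have hg0 : ∀ w ∈ L.realSpace, gmap a b c d w ≠ 0 := by
    intro w hw h0
    obtain ⟨_, _, h3, h4⟩ := (hmem w).1 hw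
    have e0 : w a - w d = 0 := by simpa [gmap] using congrArg (fun z : EuclideanSpace ℝ (Fin 3) => z 0) h0
    have e1 : w b - w d = 0 := by simpa [gmap] using congrArg (fun z : EuclideanSpace ℝ (Fin 3) => z 1) h0
    have e2 : w c - w d = 0 := by simpa [gmap] using congrArg (fun z : EuclideanSpace ℝ (Fin 3) => z 2) h0
    rcases h4 with h | h | h | h <;> linarith
  have hy0 : ∀ y ∈ Metric.sphere (0 : EuclideanSpace ℝ (Fin 3)) 1, y ≠ 0 := by
    rintro y hy rfl
    simp at hy
  have him : ∀ y : EuclideanSpace ℝ (Fin 3), y ≠ 0 → imap a b c d y ∈ L.realSpace := by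
    intro y hy
    have hσ := sigma_pos y hy
    obtain ⟨h1, h2, h3, h4, h5⟩ := mn_spec (y 0) (y 1) (y 2)
    rw [hmem]
    refine ⟨fun v => ?_, fun v hv => ?_, ?_, ?_⟩
    · unfold imap
      apply div_nonneg _ hσ.le
      split_ifs <;> linarith
    · simp only [Finset.mem_insert, Finset.mem_singleton, not_or] at hv
      simp [imap, hv]
    · simp only [imap, hab, hac, had, hbc, hbd, hcd, hab.symm, hac.symm, had.symm, hbc.symm,
        hbd.symm, hcd.symm, if_true, if_false]
      rw [← add_div, ← add_div, ← add_div, div_eq_one_iff_eq hσ.ne']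
      ring
    · simp only [imap, hab, hac, had, hbc, hbd, hcd, hab.symm, hac.symm, had.symm, hbc.symm,
        hbd.symm, hcd.symm, if_true, if_false]
      rcases h5 with h | h | h | h
      · left; rw [h]; simp
      · right; left; rw [h]; simp
      · right; right; left; rw [h]; simp
      · right; right; right; rw [h]; simp
  have hgi : ∀ y : EuclideanSpace ℝ (Fin 3), gmap a b c d (imap a b c d y) =
      (y 0 + y 1 + y 2 - 4 * mn (y 0) (y 1) (y 2))⁻¹ • y := by
    intro y
    ext i
    fin_cases i <;>
    · simp [gmap, imap, hab, hac, had, hbc, hbd, hcd, hab.symm, hac.symm, had.symm, hbc.symm,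
        hbd.symm, hcd.symm]
      ring
  refine ⟨⟨⟨fun w => ⟨‖gmap a b c d w‖⁻¹ • gmap a b c d w, ?_⟩,
    fun y => ⟨imap a b c d y, him y (hy0 y y.2)⟩, ?_, ?_⟩, ?_, ?_⟩⟩
  · have := hg0 w w.2
    simp [norm_smul, this]
  · rintro ⟨w, hw⟩
    apply Subtype.ext
    obtain ⟨h1, h2, h3, h4⟩ := (hmem w).1 hw
    have hn : 0 < ‖gmap a b c d w‖⁻¹ := inv_pos.2 (norm_pos_iff.2 (hg0 w hw))
    simp only
    set n := ‖gmap a b c d w‖⁻¹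
    have y0 : (n • gmap a b c d w) 0 = n * (w a - w d) := by simp [gmap]
    have y1 : (n • gmap a b c d w) 1 = n * (w b - w d) := by simp [gmap]
    have y2 : (n • gmap a b c d w) 2 = n * (w c - w d) := by simp [gmap]
    have pa := mul_nonneg hn.le (h1 a)
    have pb := mul_nonneg hn.le (h1 b)
    have pc := mul_nonneg hn.le (h1 c)
    have pd := mul_nonneg hn.le (h1 d)
    have hm : mn (n * (w a - w d)) (n * (w b - w d)) (n * (w c - w d)) = - (n * w d) := by
      apply mn_eq
      · linarith
      · linarith
      · linarith
      · linarith
      · rcases h4 with h | h | h | h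
        · left; rw [h]; ring
        · right; left; rw [h]; ring
        · right; right; left; rw [h]; ring
        · right; right; right; rw [h]; ring
    have hσ : n * (w a - w d) + n * (w b - w d) + n * (w c - w d) - 4 * -(n * w d) = n := by
      linear_combination n * h3
    funext v
    unfold imap
    rw [y0, y1, y2, hm, hσ, div_eq_iff hn.ne']
    split_ifs with i1 i2 i3 i4
    · subst i1; ring
    · subst i2; ring
    · subst i3; ring
    · subst i4; ring
    · rw [h2 v (by simp [*])]; ring
  · rintro ⟨y, hy⟩
    apply Subtype.ext
    have hσ := sigma_pos y (hy0 y hy)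
    have hy1 : ‖y‖ = 1 := by simpa using hy
    simp only
    rw [hgi, norm_smul, hy1, mul_one, smul_smul, Real.norm_of_nonneg (inv_nonneg.2 hσ.le), inv_inv,
      mul_inv_cancel₀ hσ.ne', one_smul]
  · apply Continuous.subtype_mk
    have hg : Continuous fun w : L.realSpace => gmap a b c d w :=
      (gmap_cont a b c d).comp continuous_subtype_val
    exact (hg.norm.inv₀ fun w => norm_ne_zero_iff.2 (hg0 w w.2)).smul hg
  · apply Continuous.subtype_mk
    refine continuous_pi fun v => ?_
    have c0 : ∀ i : Fin 3, Continuous fun y : Metric.sphere (0 : EuclideanSpace ℝ (Fin 3)) 1 =>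
        (y : EuclideanSpace ℝ (Fin 3)) i := fun i =>
      (PiLp.continuous_apply 2 _ i).comp continuous_subtype_val
    have cm : Continuous fun y : Metric.sphere (0 : EuclideanSpace ℝ (Fin 3)) 1 =>
        mn ((y : EuclideanSpace ℝ (Fin 3)) 0) ((y : EuclideanSpace ℝ (Fin 3)) 1)
          ((y : EuclideanSpace ℝ (Fin 3)) 2) :=
      ((c0 0).min (c0 1)).min ((c0 2).min continuous_const)
    unfold imap
    refine Continuous.div ?_ ?_ fun y => (sigma_pos y (hy0 y y.2)).ne'
    · split_ifs
      · exact (c0 0).sub cm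
      · exact (c0 1).sub cm
      · exact (c0 2).sub cm
      · exact cm.neg
      · exact continuous_const
    · exact (((c0 0).add (c0 1)).add (c0 2)).sub (continuous_const.mul cm)

/-- If all facets of the 4-simplex boundary lie in `K`, no vertex is singular. -/
lemma no_singular {K : SComplex} {S : Finset ℕ} (hS : S.card = 5)
    (hK : K.IsNormalPseudomanifold 3) (hall : ∀ x ∈ S, S.erase x ∈ K.faces) (v : ℕ) :
    ¬ K.IsSingular v := by
  have hf := full_of_pure K hK.1
  have hc4 : ∀ z ∈ S, (S.erase z).card = 4 := fun z hz => by
    rw [Finset.card_erase_of_mem hz, hS]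
  have hsub : ∀ F G, Relation.ReflTransGen K.FacetAdj F G → F ⊆ S → G ⊆ S := by
    intro F G hFG
    induction hFG with
    | refl => exact id
    | tail _ hab ih =>
      rename_i A B _
      intro hF
      have hA := ih hF
      have ha := (facet_iff hf A).1 hab.1
      have hb := (facet_iff hf B).1 hab.2.1
      have h3 : (A ∩ B).card = 3 := by have := hab.2.2; omega
      have hABS : A ∩ B ⊆ S := Finset.inter_subset_left.trans hA
      have hABK : A ∩ B ∈ K.faces := by
        refine K.down_closed A ha.1 _ Finset.inter_subset_left ?_
        intro h0; rw [h0] at h3; simp at h3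
      have h2 := hK.2.2.1 _ hABK h3
      have hd : (S \ (A ∩ B)).card = 2 := by
        rw [Finset.card_sdiff_of_subset hABS, hS, h3]
      obtain ⟨x, y, hxy, hh⟩ := Finset.card_eq_two.1 hd
      have hx : x ∈ S \ (A ∩ B) := by rw [hh]; simp
      have hy : y ∈ S \ (A ∩ B) := by rw [hh]; simp
      rw [Finset.mem_sdiff] at hx hy
      have hexy : S.erase x ≠ S.erase y := by
        intro hh
        have : y ∈ S.erase x := Finset.mem_erase.2 ⟨hxy.symm, hy.1⟩
        rw [hh] at this; simp at this
      have heq : {S.erase x, S.erase y} = K.faces.filter fun F => F.card = 3 + 1 ∧ A ∩ B ⊆ F := by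
        apply Finset.eq_of_subset_of_card_le
        · intro F hF
          simp only [Finset.mem_insert, Finset.mem_singleton] at hF
          rw [Finset.mem_filter]
          rcases hF with rfl | rfl
          · exact ⟨hall x hx.1, hc4 x hx.1, Finset.subset_erase.2 ⟨hABS, hx.2⟩⟩
          · exact ⟨hall y hy.1, hc4 y hy.1, Finset.subset_erase.2 ⟨hABS, hy.2⟩⟩
        · rw [h2, Finset.card_pair hexy]
      have hB : B ∈ ({S.erase x, S.erase y} : Finset (Finset ℕ)) := by
        rw [heq, Finset.mem_filter]
        exact ⟨hb.1, hb.2, Finset.inter_subset_right⟩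
      simp only [Finset.mem_insert, Finset.mem_singleton] at hB
      rcases hB with rfl | rfl <;> exact Finset.erase_subset _ _
  obtain ⟨z, hz⟩ : S.Nonempty := by rw [← Finset.card_pos, hS]; norm_num
  have hfaces : ∀ α, α ∈ K.faces ↔ α ⊆ S ∧ α ≠ ∅ ∧ α ≠ S := by
    intro α
    constructor
    · intro hα
      obtain ⟨F, hF, hF4, hαF⟩ := hf α hα
      have := hsub _ F (hK.2.1 (S.erase z) F ((facet_iff hf _).2 ⟨hall z hz, hc4 z hz⟩)
        ((facet_iff hf _).2 ⟨hF, hF4⟩)) (Finset.erase_subset _ _)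
      refine ⟨hαF.trans this, ne_empty hα, ?_⟩
      rintro rfl
      have := Finset.card_le_card hαF
      omega
    · rintro ⟨h1, h2, h3⟩
      obtain ⟨x, hx, hxα⟩ := Finset.not_subset.1 (fun hh => h3 (h1.antisymm hh) : ¬ S ⊆ α)
      exact K.down_closed _ (hall x hx) _ (Finset.subset_erase.2 ⟨h1, hxα⟩) h2
  rintro ⟨hv, hns⟩
  apply hns
  have hvS : v ∈ S := by simpa using ((hfaces _).1 hv).1
  obtain ⟨a, b, c, d, hab, hac, had, hbc, hbd, hcd, hh⟩ := Finset.card_eq_four.1 (hc4 v hvS)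
  refine sphere_of_tetra hab hac had hbc hbd hcd ?_
  rw [← hh]
  ext γ
  simp only [mem_lk, properFaces, Finset.mem_filter, Finset.mem_powerset, hfaces]
  have e1 : γ ∩ {v} = ∅ ↔ v ∉ γ := by
    rw [← Finset.disjoint_iff_inter_eq_empty, Finset.disjoint_singleton_right]
  rw [e1, Finset.subset_erase]
  constructor
  · rintro ⟨⟨h1, h2, h3⟩, h4, h5, h6, h7⟩
    refine ⟨⟨h1, h4⟩, h2, ?_⟩
    rintro rfl
    apply h7
    rw [Finset.union_comm, ← Finset.insert_eq, Finset.insert_erase hvS]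
  · rintro ⟨⟨h1, h2⟩, h3, h4⟩
    refine ⟨⟨h1, h3, fun h => h2 (h ▸ hvS)⟩, h2, ?_, ?_, ?_⟩
    · exact Finset.union_subset h1 (by simpa using hvS)
    · simp
    · intro h
      apply h4
      rw [← h, Finset.union_comm, ← Finset.insert_eq, Finset.erase_insert h2]

/-- An edge with at most three link vertices gives flip data. -/
lemma exists_flip {K : SComplex} {e : Finset ℕ} (hK : K.IsNormalPseudomanifold 3)
    (he : e ∈ K.faces) (hc : e.card = 2) (hlt : (K.lk e).fnum 0 < 4) : ∃ T, Flip K e T := by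
  have hf := full_of_pure K hK.1
  let V := ((K.lk e).faces.filter fun s => s.card = 0 + 1).biUnion id
  have hVc : V.card ≤ 3 := by
    have h1 : V.card ≤ ∑ s ∈ (K.lk e).faces.filter (fun s => s.card = 0 + 1), (id s).card :=
      Finset.card_biUnion_le
    have h2 : ∑ s ∈ (K.lk e).faces.filter (fun s => s.card = 0 + 1), (id s).card =
        (K.lk e).fnum 0 := by
      unfold fnum
      rw [Finset.card_eq_sum_ones]
      apply Finset.sum_congr rfl
      intro s hs
      exact (Finset.mem_filter.1 hs).2
    omega
  have hV : ∀ x, x ∈ V ↔ x ∉ e ∧ insert x e ∈ K.faces := by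
    intro x
    rw [← mem_lk_single]
    simp only [V, Finset.mem_biUnion, Finset.mem_filter, id]
    constructor
    · rintro ⟨s, ⟨h1, h2⟩, h3⟩
      obtain ⟨y, rfl⟩ := Finset.card_eq_one.1 h2
      simp only [Finset.mem_singleton] at h3
      exact h3 ▸ h1
    · intro h
      exact ⟨{x}, ⟨h, by simp⟩, by simp⟩
  have hsup : ∀ α ∈ K.faces, e ⊆ α → ∀ x ∈ α, x ∉ e → x ∈ V := by
    intro α hα heα x hx hxe
    exact (hV x).2 ⟨hxe, K.down_closed α hα _ (Finset.insert_subset hx heα) (by simp)⟩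
  have hnb : ∀ x ∈ V, ∃ y z, y ≠ z ∧ y ≠ x ∧ z ≠ x ∧ y ∈ V ∧ z ∈ V ∧
      insert y (insert x e) ∈ K.faces ∧ insert z (insert x e) ∈ K.faces := by
    intro x hx
    obtain ⟨hxe, hxK⟩ := (hV x).1 hx
    have hc3 : (insert x e).card = 3 := by rw [Finset.card_insert_of_notMem hxe, hc]
    have h2 := hK.2.2.1 _ hxK hc3
    obtain ⟨F, G, hFG, hh⟩ := Finset.card_eq_two.1 h2
    have ext1 : ∀ F ∈ K.faces, F.card = 3 + 1 → insert x e ⊆ F →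
        ∃ y, y ∉ insert x e ∧ insert y (insert x e) = F := by
      intro F _ h4 hsF
      obtain ⟨y, hy, hys⟩ := Finset.exists_mem_notMem_of_card_lt_card
        (show (insert x e).card < F.card by omega)
      refine ⟨y, hys, Finset.eq_of_subset_of_card_le (Finset.insert_subset hy hsF) ?_⟩
      rw [Finset.card_insert_of_notMem hys]; omega
    have hF : F ∈ K.faces.filter fun F => F.card = 3 + 1 ∧ insert x e ⊆ F := by rw [hh]; simp
    have hG : G ∈ K.faces.filter fun F => F.card = 3 + 1 ∧ insert x e ⊆ F := by rw [hh]; simp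
    rw [Finset.mem_filter] at hF hG
    obtain ⟨y, hy, hyF⟩ := ext1 F hF.1 hF.2.1 hF.2.2
    obtain ⟨z, hz, hzG⟩ := ext1 G hG.1 hG.2.1 hG.2.2
    simp only [Finset.mem_insert, not_or] at hy hz
    refine ⟨y, z, ?_, hy.1, hz.1, ?_, ?_, hyF ▸ hF.1, hzG ▸ hG.1⟩
    · rintro rfl; exact hFG (hyF.symm.trans hzG)
    · exact hsup F hF.1 ((Finset.subset_insert _ _).trans hF.2.2) y (by rw [← hyF]; simp) hy.2
    · exact hsup G hG.1 ((Finset.subset_insert _ _).trans hG.2.2) z (by rw [← hzG]; simp) hz.2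
  have hVeq : ∀ x y z, x ∈ V → y ∈ V → z ∈ V → y ≠ z → y ≠ x → z ≠ x → ({x, y, z} : Finset ℕ) = V := by
    intro x y z hx hy hz h1 h2 h3
    apply Finset.eq_of_subset_of_card_le
    · intro w hw
      simp only [Finset.mem_insert, Finset.mem_singleton] at hw
      rcases hw with rfl | rfl | rfl <;> assumption
    · rw [Finset.card_eq_three.2 ⟨x, y, z, h2.symm, h3.symm, h1, rfl⟩]; exact hVc
  obtain ⟨F, hF, hF4, heF⟩ := hf e he
  obtain ⟨x, hx, hxe⟩ := Finset.exists_mem_notMem_of_card_lt_card (show e.card < F.card by omega)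
  have hxV := hsup F hF heF x hx hxe
  have hV3 : V.card = 3 := by
    obtain ⟨y, z, h1, h2, h3, h4, h5, _⟩ := hnb x hxV
    rw [← hVeq x y z hxV h4 h5 h1 h2 h3]
    exact Finset.card_eq_three.2 ⟨x, y, z, h2.symm, h3.symm, h1, rfl⟩
  refine ⟨V, hc, hV3, fun y hy hyV => ((hV y).1 hyV).1 hy, ?_, ?_⟩
  · intro α hα heα y hy
    by_cases hye : y ∈ e
    · exact Finset.mem_union_left _ hye
    · exact Finset.mem_union_right _ (hsup α hα heα y hy hye)
  · intro α hα hne hVα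
    obtain ⟨p, hp, hpα⟩ := Finset.not_subset.1 hVα
    -- choose q in V different from p
    obtain ⟨q, r, hqr, hqp, hrp, hqV, hrV, _, _⟩ := hnb p hp
    have hpV := hVeq p q r hp hqV hrV hqr hqp hrp
    have hqrK : insert r (insert q e) ∈ K.faces := by
      obtain ⟨s, t, hst, hsq, htq, hsV, htV, hsK, htK⟩ := hnb q hqV
      rw [← hpV] at hsV htV
      simp only [Finset.mem_insert, Finset.mem_singleton] at hsV htV
      rcases hsV with rfl | rfl | rfl
      · rcases htV with rfl | rfl | rfl
        · exact absurd rfl hst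
        · exact absurd rfl htq
        · exact htK
      · exact absurd rfl hsq
      · exact hsK
    refine K.down_closed _ hqrK _ ?_ hne
    intro w hw
    have := hα hw
    rw [← hpV] at this
    simp only [Finset.mem_union, Finset.mem_insert, Finset.mem_singleton] at this ⊢
    have : w ≠ p := fun h => hpα (h ▸ hw)
    tauto

/-- Lemma 3.1: in the class `R`, every edge has degree at least 4. -/
theorem statement2 (K : SComplex) (u v : ℕ) (hK : InClassR K)
    (huv : ({u, v} : Finset ℕ) ∈ K.faces) (hne : u ≠ v) :
    4 ≤ (K.lk {u, v}).fnum 0 := by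
  by_contra hlt
  obtain ⟨hN, h1, _, hi, hii⟩ := hK
  have hc2 : ({u, v} : Finset ℕ).card = 2 := Finset.card_pair hne
  obtain ⟨T, h⟩ := exists_flip hN huv hc2 (by omega)
  by_cases hTK : T ∈ K.faces
  · have hall : ∀ x ∈ ({u, v} ∪ T : Finset ℕ), ({u, v} ∪ T : Finset ℕ).erase x ∈ K.faces := by
      intro x hx
      rcases Finset.mem_union.1 hx with hxe | hxT
      · have hc4 : (({u, v} ∪ T : Finset ℕ).erase x).card = 4 := by
          rw [Finset.card_erase_of_mem hx, h.cardS]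
        apply hi _ hc4
        intro t ht
        simp only [properFaces, Finset.mem_filter, Finset.mem_powerset] at ht
        obtain ⟨ht1, ht2, ht3⟩ := ht
        by_cases hTt : T ⊆ t
        · have : T = t := by
            apply Finset.eq_of_subset_of_card_le hTt
            have := Finset.card_lt_card (Finset.ssubset_iff_subset_ne.2 ⟨ht1, ht3⟩)
            rw [h.hT]; omega
          exact this ▸ hTK
        · exact h.low t (ht1.trans (Finset.erase_subset _ _)) ht2 hTt
      · exact h.eraseT hxT
    have hemp : {w | K.IsSingular w} = ∅ := by
      ext w
      simpa using no_singular h.cardS hN hall w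
    rw [hemp] at h1
    simp at h1
  · have := hii _ (flip_normal h hTK hN) (Or.inl (flip_move hne h hTK))
    have := flip_g2 h
    omega

end SComplex
end

section
/- Let K belong to the class R and let uv be an edge of K where the vertex v is non-singular. Then lk(u,K) ∩ lk(v,K) − lk(uv,K) is nonempty. -/
namespace SComplex

/-- Adjacency in the link of `σ`. -/
def LAdj (K : SComplex) (σ : Finset ℕ) (a b : ℕ) : Prop :=
  a ∉ σ ∧ b ∉ σ ∧ insert a (insert b σ) ∈ K.faces

/-- Connectedness of the link of `σ`. -/
def LConn (K : SComplex) (σ : Finset ℕ) : Prop :=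
  ∀ p q, p ∉ σ → insert p σ ∈ K.faces → q ∉ σ → insert q σ ∈ K.faces →
    Relation.ReflTransGen (K.LAdj σ) p q

/-- Exactly two vertices complete `s`. -/
def TwoExt (K : SComplex) (s : Finset ℕ) : Prop :=
  ∃ x y, x ≠ y ∧ x ∉ s ∧ y ∉ s ∧ ∀ z, z ∉ s → (insert z s ∈ K.faces ↔ z = x ∨ z = y)

/-- A convenient reformulation of being a normal 3-pseudomanifold. -/
structure Good (K : SComplex) : Prop where
  ne : K.faces.Nonempty
  pure : ∀ s ∈ K.faces, ∃ F ∈ K.faces, s ⊆ F ∧ F.card = 4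
  dim : ∀ s ∈ K.faces, s.card ≤ 4
  two : ∀ s ∈ K.faces, s.card = 3 → K.TwoExt s
  conn : ∀ s, s ∈ K.faces ∨ s = ∅ → s.card ≤ 2 → K.LConn s

theorem dc (K : SComplex) {s t : Finset ℕ} (hs : s ∈ K.faces) (h : t ⊆ s) (hn : t.Nonempty) :
    t ∈ K.faces := K.down_closed s hs t h (Finset.nonempty_iff_ne_empty.mp hn)

theorem LAdj.symm {K : SComplex} {σ : Finset ℕ} {a b : ℕ} (h : K.LAdj σ a b) : K.LAdj σ b a := by
  refine ⟨h.2.1, h.1, ?_⟩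
  rw [Finset.insert_comm]; exact h.2.2

theorem eq_insert_of_card {s F : Finset ℕ} (h : s ⊆ F) (hc : F.card = s.card + 1) :
    ∃ x, x ∉ s ∧ F = insert x s := by
  have h1 : (F \ s).card = 1 := by rw [Finset.card_sdiff_of_subset h]; omega
  obtain ⟨x, hx⟩ := Finset.card_eq_one.mp h1
  refine ⟨x, ?_, ?_⟩
  · have : x ∈ F \ s := by rw [hx]; simp
    exact (Finset.mem_sdiff.mp this).2
  · rw [← Finset.sdiff_union_of_subset h, hx]; rfl

theorem twoExt_iff (K : SComplex) (s : Finset ℕ) (hs : s.card = 3) :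
    (K.faces.filter fun F => F.card = 3 + 1 ∧ s ⊆ F).card = 2 ↔ K.TwoExt s := by
  constructor
  · intro h
    obtain ⟨F, G, hFG, he⟩ := Finset.card_eq_two.mp h
    have hF : F ∈ K.faces.filter fun F => F.card = 3 + 1 ∧ s ⊆ F := by rw [he]; simp
    have hG : G ∈ K.faces.filter fun F => F.card = 3 + 1 ∧ s ⊆ F := by rw [he]; simp
    rw [Finset.mem_filter] at hF hG
    obtain ⟨x, hx, rfl⟩ := eq_insert_of_card hF.2.2 (by omega)
    obtain ⟨y, hy, rfl⟩ := eq_insert_of_card hG.2.2 (by omega)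
    refine ⟨x, y, fun h => hFG (by rw [h]), hx, hy, fun z hz => ⟨fun h => ?_, ?_⟩⟩
    · have : insert z s ∈ K.faces.filter fun F => F.card = 3 + 1 ∧ s ⊆ F := by
        rw [Finset.mem_filter]
        exact ⟨h, by rw [Finset.card_insert_of_notMem hz, hs], Finset.subset_insert _ _⟩
      rw [he] at this
      simp only [Finset.mem_insert, Finset.mem_singleton] at this
      rcases this with h | h
      · left
        have : z ∈ insert x s := by rw [← h]; simp
        grind
      · right
        have : z ∈ insert y s := by rw [← h]; simp
        grind
    · rintro (rfl | rfl)
      · exact hF.1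
      · exact hG.1
  · rintro ⟨x, y, hxy, hx, hy, h⟩
    have : (K.faces.filter fun F => F.card = 3 + 1 ∧ s ⊆ F) = {insert x s, insert y s} := by
      ext F
      simp only [Finset.mem_filter, Finset.mem_insert, Finset.mem_singleton]
      constructor
      · rintro ⟨h1, h2, h3⟩
        obtain ⟨z, hz, rfl⟩ := eq_insert_of_card h3 (by omega)
        rcases (h z hz).mp h1 with rfl | rfl <;> simp
      · rintro (rfl | rfl)
        · exact ⟨(h x hx).mpr (Or.inl rfl), by rw [Finset.card_insert_of_notMem hx, hs],
            Finset.subset_insert _ _⟩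
        · exact ⟨(h y hy).mpr (Or.inr rfl), by rw [Finset.card_insert_of_notMem hy, hs],
            Finset.subset_insert _ _⟩
    rw [this]
    apply Finset.card_pair
    intro he
    have : x ∈ insert y s := by rw [← he]; simp
    grind

theorem mem_lk_vertex (K : SComplex) (σ : Finset ℕ) (p : ℕ) :
    {p} ∈ (K.lk σ).faces ↔ p ∉ σ ∧ insert p σ ∈ K.faces := by
  simp only [lk, Finset.mem_filter]
  constructor
  · rintro ⟨_, h2, h3⟩
    refine ⟨fun h => ?_, by rwa [Finset.insert_eq]⟩
    have : p ∈ ({p} ∩ σ : Finset ℕ) := by simp [h]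
    rw [h2] at this; simp at this
  · rintro ⟨h1, h2⟩
    exact ⟨K.dc h2 (by simp) (by simp), by simp [h1], by rwa [← Finset.insert_eq]⟩

theorem lk_vertAdj (K : SComplex) (σ : Finset ℕ) : (K.lk σ).VertAdj = K.LAdj σ := by
  ext p q
  simp only [lk, Finset.mem_filter, VertAdj, LAdj]
  have e : ({p, q} ∪ σ : Finset ℕ) = insert p (insert q σ) := by ext; simp
  rw [e]
  constructor
  · rintro ⟨_, h2, h3⟩
    refine ⟨fun h => ?_, fun h => ?_, h3⟩
    · have : p ∈ ({p, q} ∩ σ : Finset ℕ) := by simp [h]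
      rw [h2] at this; simp at this
    · have : q ∈ ({p, q} ∩ σ : Finset ℕ) := by simp [h]
      rw [h2] at this; simp at this
  · rintro ⟨h1, h2, h3⟩
    refine ⟨K.dc h3 (by grind) (by simp), ?_, h3⟩
    ext z; simp; grind

theorem conn_of_lk {K : SComplex} {σ : Finset ℕ} (h : (K.lk σ).Conn) : K.LConn σ := by
  intro p q hp hpK hq hqK
  have := h.2 p q ((K.mem_lk_vertex σ p).mpr ⟨hp, hpK⟩) ((K.mem_lk_vertex σ q).mpr ⟨hq, hqK⟩)
  rwa [lk_vertAdj] at this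

theorem good_of_npm {K : SComplex} (h : K.IsNormalPseudomanifold 3) : K.Good := by
  obtain ⟨⟨h0, h1⟩, h2, h3, h4⟩ := h
  have hmax : ∀ s ∈ K.faces, ∃ F, s ⊆ F ∧ K.IsFacet F := by
    intro s hs
    obtain ⟨F, hF, hm⟩ := Finset.exists_le_maximal K.faces hs
    exact ⟨F, hF, hm.1, fun t ht hFt => le_antisymm hFt (hm.2 ht hFt)⟩
  refine ⟨h0, ?_, ?_, ?_, ?_⟩
  · intro s hs
    obtain ⟨F, hF, hm⟩ := hmax s hs
    exact ⟨F, hm.1, hF, h1 F hm⟩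
  · intro s hs
    obtain ⟨F, hF, hm⟩ := hmax s hs
    have := h1 F hm
    have := Finset.card_le_card hF
    omega
  · intro s hs hc
    exact (K.twoExt_iff s hc).mp (h3 s hs hc)
  · rintro s (hs | rfl) hc
    · exact conn_of_lk (h4 s hs hc)
    · intro p q _ hp _ hq
      obtain ⟨F, hF, hFm⟩ := hmax _ hp
      obtain ⟨G, hG, hGm⟩ := hmax _ hq
      have hpF : p ∈ F := hF (by simp)
      have hqG : q ∈ G := hG (by simp)
      have key : ∀ G, Relation.ReflTransGen K.FacetAdj F G → K.IsFacet G ∧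
          ∀ q ∈ G, Relation.ReflTransGen (K.LAdj ∅) p q := by
        intro G hFG
        induction hFG with
        | refl =>
          exact ⟨hFm, fun q hq => Relation.ReflTransGen.single
            ⟨by simp, by simp, K.dc hFm.1 (by intro z; simp; grind) (by simp)⟩⟩
        | tail _ hab ih =>
          rename_i A B _
          refine ⟨hab.2.1, fun q hq => ?_⟩
          have hc := h1 A hab.1
          have : (A ∩ B).Nonempty := by
            rw [← Finset.card_pos]; have := hab.2.2; omega
          obtain ⟨z, hz⟩ := this
          rw [Finset.mem_inter] at hz
          refine (ih.2 z hz.1).tail ⟨by simp, by simp, K.dc hab.2.1.1 (by intro z; simp; grind) (by simp)⟩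
      exact (key G (h2 F G hFm hGm)).2 q hqG

theorem chain_step {K : SComplex} (hp : ∀ s ∈ K.faces, ∃ F ∈ K.faces, s ⊆ F ∧ F.card = 4)
    (R : Finset ℕ → Finset ℕ → Prop) (htr : ∀ A B C, R A B → R B C → R A C)
    (σ : Finset ℕ) (hσ : σ.card < 4) (hc : K.LConn σ)
    (h : ∀ p, p ∉ σ → ∀ F ∈ K.faces, ∀ G ∈ K.faces, F.card = 4 → G.card = 4 →
      insert p σ ⊆ F → insert p σ ⊆ G → R F G) :
    ∀ F ∈ K.faces, ∀ G ∈ K.faces, F.card = 4 → G.card = 4 → σ ⊆ F → σ ⊆ G → R F G := by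
  intro F hF G hG hFc hGc hsF hsG
  have ex : ∀ F : Finset ℕ, F.card = 4 → ∃ p ∈ F, p ∉ σ := by
    intro F hFc
    exact Finset.exists_mem_notMem_of_card_lt_card (by omega)
  obtain ⟨p, hpF, hpσ⟩ := ex F hFc
  obtain ⟨q, hqG, hqσ⟩ := ex G hGc
  have hip : insert p σ ⊆ F := Finset.insert_subset hpF hsF
  have hiq : insert q σ ⊆ G := Finset.insert_subset hqG hsG
  have path := hc p q hpσ (K.dc hF hip (by simp)) hqσ (K.dc hG hiq (by simp))
  have key : ∀ q, Relation.ReflTransGen (K.LAdj σ) p q →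
      ∀ G ∈ K.faces, G.card = 4 → insert q σ ⊆ G → R F G := by
    intro q hpq
    induction hpq with
    | refl => exact fun G hG hGc hs => h p hpσ F hF G hG hFc hGc hip hs
    | tail _ hab ih =>
      intro G hG hGc hs
      obtain ⟨ha, hb, hm⟩ := hab
      obtain ⟨H, hH, hsub, hHc⟩ := hp _ hm
      refine htr _ H _ (ih H hH hHc (fun z hz => hsub (by grind))) ?_
      exact h _ hb H hH G hG hHc hGc (fun z hz => hsub (by grind)) hs
  exact key q path G hG hGc hiq

theorem npm_of_good {K : SComplex} (h : K.Good) : K.IsNormalPseudomanifold 3 := by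
  have hfac : ∀ s, K.IsFacet s → s.card = 4 := by
    intro s hs
    obtain ⟨F, hF, hsF, hc⟩ := h.pure s hs.1
    rw [hs.2 F hF hsF]; exact hc
  have hfac' : ∀ s ∈ K.faces, s.card = 4 → K.IsFacet s := by
    intro s hs hc
    refine ⟨hs, fun t ht hst => Finset.eq_of_subset_of_card_le hst ?_⟩
    have := h.dim t ht
    omega
  refine ⟨⟨h.ne, hfac⟩, ?_, ?_, ?_⟩
  · let R := Relation.ReflTransGen K.FacetAdj
    have htr : ∀ A B C, R A B → R B C → R A C := fun A B C => Relation.ReflTransGen.trans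
    have s3 : ∀ σ : Finset ℕ, σ.card = 3 → ∀ F ∈ K.faces, ∀ G ∈ K.faces, F.card = 4 → G.card = 4 →
        σ ⊆ F → σ ⊆ G → R F G := by
      intro σ hσ F hF G hG hFc hGc hsF hsG
      by_cases hFG : F = G
      · rw [hFG]
      · refine Relation.ReflTransGen.single ⟨hfac' F hF hFc, hfac' G hG hGc, ?_⟩
        have h1 : σ ⊆ F ∩ G := Finset.subset_inter hsF hsG
        have h2 := Finset.card_le_card h1
        have h3 : (F ∩ G).card < F.card := by
          apply Finset.card_lt_card
          refine ⟨Finset.inter_subset_left, fun hh => hFG ?_⟩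
          exact Finset.eq_of_subset_of_card_le (fun z hz => (Finset.mem_inter.mp (hh hz)).2) (by omega)
        omega
    have s2 : ∀ σ : Finset ℕ, σ.card = 2 → ∀ F ∈ K.faces, ∀ G ∈ K.faces, F.card = 4 → G.card = 4 →
        σ ⊆ F → σ ⊆ G → R F G := by
      intro σ hσ F hF G hG hFc hGc hsF hsG
      refine chain_step h.pure R htr σ (by omega) (h.conn σ (Or.inl (K.dc hF hsF ?_)) (by omega)) ?_
        F hF G hG hFc hGc hsF hsG
      · rw [← Finset.card_pos]; omega
      · intro p hp
        exact s3 _ (by rw [Finset.card_insert_of_notMem hp, hσ])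
    have s1 : ∀ σ : Finset ℕ, σ.card = 1 → ∀ F ∈ K.faces, ∀ G ∈ K.faces, F.card = 4 → G.card = 4 →
        σ ⊆ F → σ ⊆ G → R F G := by
      intro σ hσ F hF G hG hFc hGc hsF hsG
      refine chain_step h.pure R htr σ (by omega) (h.conn σ (Or.inl (K.dc hF hsF ?_)) (by omega)) ?_
        F hF G hG hFc hGc hsF hsG
      · rw [← Finset.card_pos]; omega
      · intro p hp
        exact s2 _ (by rw [Finset.card_insert_of_notMem hp, hσ])
    intro F G hF hG
    refine chain_step h.pure R htr ∅ (by simp) (h.conn ∅ (Or.inr rfl) (by simp)) ?_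
        F hF.1 G hG.1 (hfac _ hF) (hfac _ hG) (by simp) (by simp)
    intro p hp
    exact s1 _ (by simp)
  · intro s hs hc
    exact (K.twoExt_iff s hc).mpr (h.two s hs hc)
  · intro s hs hc
    constructor
    · obtain ⟨F, hF, hsF, hFc⟩ := h.pure s hs
      obtain ⟨p, hpF, hps⟩ : ∃ p ∈ F, p ∉ s :=
        Finset.exists_mem_notMem_of_card_lt_card (by omega)
      exact ⟨{p}, (K.mem_lk_vertex s p).mpr ⟨hps, K.dc hF (Finset.insert_subset hpF hsF) (by simp)⟩⟩
    · intro p q hp hq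
      rw [mem_lk_vertex] at hp hq
      rw [lk_vertAdj]
      exact h.conn s (Or.inl hs) hc p q hp.1 hp.2 hq.1 hq.2

theorem even_pairs (C : Finset ℕ) (R : ℕ → ℕ → Prop) [DecidableRel R]
    (hs : ∀ a b, R a b → R b a) (hi : ∀ a, ¬ R a a) :
    ((∑ x ∈ C, (C.filter (R x)).card : ℕ) : ZMod 2) = 0 := by
  have : (∑ x ∈ C, (C.filter (R x)).card : ℕ) = ((C ×ˢ C).filter fun p => R p.1 p.2).card := by
    rw [Finset.card_filter, Finset.sum_product]
    simp only [Finset.card_filter]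
  rw [this, Finset.cast_card]
  refine Finset.sum_involution (fun p _ => (p.2, p.1)) ?_ ?_ ?_ ?_
  · intros; rfl
  · rintro ⟨a, b⟩ hp _ heq
    simp only [Finset.mem_filter, Finset.mem_product] at hp
    simp only [Prod.mk.injEq] at heq
    exact hi a (by have := hp.2; rwa [heq.1] at this)
  · rintro ⟨a, b⟩ hp
    simp only [Finset.mem_filter, Finset.mem_product] at hp ⊢
    exact ⟨⟨hp.1.2, hp.1.1⟩, hs _ _ hp.2⟩
  · rintro ⟨a, b⟩ hp
    rfl

theorem rtg_lift {r p : ℕ → ℕ → Prop} (f : ℕ → ℕ)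
    (h : ∀ a b, r a b → Relation.ReflTransGen p (f a) (f b)) {a b : ℕ}
    (hab : Relation.ReflTransGen r a b) : Relation.ReflTransGen p (f a) (f b) := by
  induction hab with
  | refl => exact Relation.ReflTransGen.refl
  | tail _ hbc ih => exact ih.trans (h _ _ hbc)

theorem rtg_symm_s3 {r : ℕ → ℕ → Prop} (hs : ∀ a b, r a b → r b a) {a b : ℕ}
    (hab : Relation.ReflTransGen r a b) : Relation.ReflTransGen r b a := by
  induction hab with
  | refl => exact Relation.ReflTransGen.refl
  | tail _ hbc ih => exact Relation.ReflTransGen.head (hs _ _ hbc) ih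

/-- Removing a vertex from a cycle leaves a connected graph. -/
theorem Good.handshake {K : SComplex} (h : K.Good) {σ : Finset ℕ} (hσ : σ.card = 2) {v p q : ℕ}
    (hpq : p ≠ q) (hvp : v ≠ p) (hvq : v ≠ q) (hp : K.LAdj σ v p) (hq : K.LAdj σ v q) :
    Relation.ReflTransGen (fun a b => K.LAdj σ a b ∧ a ≠ v ∧ b ≠ v) p q := by
  classical
  by_contra hcon
  set R := fun a b => K.LAdj σ a b ∧ a ≠ v ∧ b ≠ v with hR
  have htwo : ∀ x, x ∉ σ → insert x σ ∈ K.faces → ∃ y z, y ≠ z ∧ y ≠ x ∧ z ≠ x ∧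
      ∀ t, t ≠ x → (K.LAdj σ x t ↔ t = y ∨ t = z) := by
    intro x hx hxK
    obtain ⟨y, z, hyz, hy, hz, hh⟩ := h.two _ hxK (by rw [Finset.card_insert_of_notMem hx, hσ])
    refine ⟨y, z, hyz, by grind, by grind, fun t ht => ⟨fun ha => ?_, fun ha => ?_⟩⟩
    · exact (hh t (by have := ha.2.1; grind)).mp ha.symm.2.2
    · have ht : t ∉ insert x σ := by grind
      exact LAdj.symm ⟨by grind, hx, (hh t ht).mpr ha⟩
  have hface : ∀ {a b}, K.LAdj σ a b → insert a σ ∈ K.faces := by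
    intro a b hab
    exact K.dc hab.2.2 (by grind) (by simp)
  obtain ⟨y0, z0, hyz0, hyv, hzv, hv0⟩ := htwo v hp.1 (hface hp)
  have hvN : ∀ t, t ≠ v → K.LAdj σ v t → t = p ∨ t = q := by
    intro t ht hta
    have h1 := (hv0 p hvp.symm).mp hp
    have h2 := (hv0 q hvq.symm).mp hq
    have h3 := (hv0 t ht).mp hta
    grind
  let V : Finset ℕ := K.faces.biUnion id
  let C := V.filter fun x => Relation.ReflTransGen R p x
  have hC : ∀ x, x ∈ C ↔ (x ∉ σ ∧ insert x σ ∈ K.faces ∧ x ≠ v) ∧ Relation.ReflTransGen R p x := by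
    intro x
    simp only [C, V, Finset.mem_filter, Finset.mem_biUnion, id]
    constructor
    · rintro ⟨_, h2⟩
      refine ⟨?_, h2⟩
      rcases Relation.ReflTransGen.cases_tail h2 with h3 | ⟨c, _, hc⟩
      · subst h3
        exact ⟨hp.2.1, hface hp.symm, hvp.symm⟩
      · exact ⟨hc.1.2.1, hface hc.1.symm, hc.2.2⟩
    · rintro ⟨⟨h1, h2, h3⟩, h4⟩
      exact ⟨⟨_, h2, by simp⟩, h4⟩
  have hclosed : ∀ x y, x ∈ C → K.LAdj σ x y → y ≠ v → y ∈ C := by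
    intro x y hx hxy hyv
    rw [hC] at hx ⊢
    exact ⟨⟨hxy.2.1, hface hxy.symm, hyv⟩, hx.2.tail ⟨hxy, hx.1.2.2, hyv⟩⟩
  have hpC : p ∈ C := (hC p).mpr ⟨⟨hp.2.1, hface hp.symm, hvp.symm⟩, Relation.ReflTransGen.refl⟩
  have hqC : q ∉ C := fun hq => hcon ((hC q).mp hq).2
  have hvC : v ∉ C := fun hq => ((hC v).mp hq).1.2.2 rfl
  have hev := even_pairs C (fun a b => a ≠ b ∧ K.LAdj σ a b) (fun a b hab => ⟨hab.1.symm, hab.2.symm⟩)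
    (fun a ha => ha.1 rfl)
  rw [Nat.cast_sum, ← Finset.add_sum_erase C _ hpC, Finset.sum_eq_zero, add_zero] at hev
  · obtain ⟨y, z, hyz, hyp, hzp, hN⟩ := htwo p hp.2.1 (hface hp.symm)
    have hvm := (hN v hvp).mp hp.symm
    have : ∃ t, t ≠ v ∧ t ≠ p ∧ ∀ s, s ≠ p → (K.LAdj σ p s ↔ s = v ∨ s = t) := by
      rcases hvm with rfl | rfl
      · exact ⟨z, hyz.symm, hzp, hN⟩
      · exact ⟨y, hyz, hyp, fun s hs => by rw [hN s hs, or_comm]⟩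
    obtain ⟨t, htv, htp, ht⟩ := this
    have htC : t ∈ C := hclosed p t hpC ((ht t htp).mpr (Or.inr rfl)) htv
    have : C.filter (fun b => p ≠ b ∧ K.LAdj σ p b) = {t} := by
      ext s
      simp only [Finset.mem_filter, Finset.mem_singleton]
      constructor
      · rintro ⟨h1, h2, h3⟩
        rcases (ht s h2.symm).mp h3 with rfl | rfl
        · exact absurd h1 hvC
        · rfl
      · rintro rfl
        exact ⟨htC, htp.symm, (ht s htp).mpr (Or.inr rfl)⟩
    rw [this] at hev
    simp at hev
  · intro x hx
    rw [Finset.mem_erase] at hx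
    obtain ⟨hxp, hxC⟩ := hx
    have hx' := (hC x).mp hxC
    obtain ⟨y, z, hyz, hyx, hzx, hN⟩ := htwo x hx'.1.1 hx'.1.2.1
    have hnv : ∀ t, K.LAdj σ x t → t ≠ v := by
      rintro t ht rfl
      rcases hvN x hx'.1.2.2 ht.symm with rfl | rfl
      · exact hxp rfl
      · exact hqC hxC
    have : C.filter (fun b => x ≠ b ∧ K.LAdj σ x b) = {y, z} := by
      ext s
      simp only [Finset.mem_filter, Finset.mem_singleton, Finset.mem_insert]
      constructor
      · rintro ⟨h1, h2, h3⟩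
        exact (hN s h2.symm).mp h3
      · intro hs
        have hsx : s ≠ x := by grind
        have := (hN s hsx).mpr hs
        exact ⟨hclosed x s hxC this (hnv s this), hsx.symm, this⟩
    rw [this, Finset.card_pair hyz]
    rfl

/-- Membership in the contracted complex. -/
def CMem (K : SComplex) (u v w : ℕ) (α : Finset ℕ) : Prop :=
  u ∉ α ∧ v ∉ α ∧ ((w ∉ α ∧ α ∈ K.faces) ∨
    (w ∈ α ∧ (insert u (α.erase w) ∈ K.faces ∨ insert v (α.erase w) ∈ K.faces)))

theorem CMem.symm {K : SComplex} {u v w : ℕ} {α : Finset ℕ} (h : CMem K u v w α) :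
    CMem K v u w α := by
  obtain ⟨h1, h2, h3 | ⟨h3, h4⟩⟩ := h
  · exact ⟨h2, h1, Or.inl h3⟩
  · exact ⟨h2, h1, Or.inr ⟨h3, h4.symm⟩⟩

/-- Everything needed to contract the edge `uv` to the new vertex `w`. -/
structure CSetup (K : SComplex) (u v w : ℕ) : Prop where
  good : K.Good
  ne : u ≠ v
  uv : insert u (insert v ∅) ∈ K.faces
  fresh : ∀ s ∈ K.faces, w ∉ s
  lc : ∀ γ : Finset ℕ, γ.Nonempty → u ∉ γ → v ∉ γ → insert u γ ∈ K.faces → insert v γ ∈ K.faces →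
    insert u (insert v γ) ∈ K.faces

theorem CSetup.symm {K : SComplex} {u v w : ℕ} (h : CSetup K u v w) : CSetup K v u w where
  good := h.good
  ne := h.ne.symm
  uv := by rw [Finset.insert_comm]; exact h.uv
  fresh := h.fresh
  lc := fun γ h0 h1 h2 h3 h4 => by rw [Finset.insert_comm]; exact h.lc γ h0 h2 h1 h4 h3

theorem CSetup.wu {K : SComplex} {u v w : ℕ} (h : CSetup K u v w) : w ≠ u := by
  have := h.fresh _ h.uv
  grind

theorem CSetup.wv {K : SComplex} {u v w : ℕ} (h : CSetup K u v w) : w ≠ v := h.symm.wu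

theorem CSetup.notBoth {K : SComplex} {u v w : ℕ} (h : CSetup K u v w) {r : Finset ℕ}
    (hr : r.card = 3) (hu : u ∉ r) (hv : v ∉ r) (h1 : insert u r ∈ K.faces)
    (h2 : insert v r ∈ K.faces) : False := by
  have := h.good.dim _ (h.lc r (by rw [← Finset.card_pos]; omega) hu hv h1 h2)
  rw [Finset.card_insert_of_notMem (by have := h.ne; grind), Finset.card_insert_of_notMem hv] at this
  omega

theorem Good.avoid {K : SComplex} (h : K.Good) {u v : ℕ} (huv : u ≠ v) {s : Finset ℕ}
    (hu : u ∉ s) (hv : v ∉ s) (hs : insert u s ∈ K.faces) :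
    ∃ r, s ⊆ r ∧ r.card = 3 ∧ u ∉ r ∧ v ∉ r ∧ insert u r ∈ K.faces := by
  obtain ⟨F, hF, hsF, hFc⟩ := h.pure _ hs
  have huF : u ∈ F := hsF (by simp)
  by_cases hvF : v ∈ F
  · have hc : (F.erase v).card = 3 := by rw [Finset.card_erase_of_mem hvF, hFc]
    have hm : F.erase v ∈ K.faces := K.dc hF (Finset.erase_subset _ _)
      (by rw [← Finset.card_pos]; omega)
    obtain ⟨x, y, hxy, hx, hy, hh⟩ := h.two _ hm hc
    have : ∃ t, t ≠ v ∧ t ∉ F.erase v ∧ insert t (F.erase v) ∈ K.faces := by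
      by_cases hxv : x = v
      · exact ⟨y, by grind, hy, (hh y hy).mpr (Or.inr rfl)⟩
      · exact ⟨x, hxv, hx, (hh x hx).mpr (Or.inl rfl)⟩
    obtain ⟨t, htv, ht, htK⟩ := this
    have hu' : u ∈ F.erase v := by grind
    refine ⟨insert t ((F.erase v).erase u), ?_, ?_, ?_, ?_, ?_⟩
    · intro z hz
      have := hsF (Finset.mem_insert_of_mem hz)
      grind
    · rw [Finset.card_insert_of_notMem (by grind), Finset.card_erase_of_mem hu', hc]
    · grind
    · grind
    · rw [Finset.insert_comm, Finset.insert_erase hu']; exact htK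
  · refine ⟨F.erase u, ?_, ?_, ?_, ?_, ?_⟩
    · intro z hz
      have := hsF (Finset.mem_insert_of_mem hz)
      grind
    · rw [Finset.card_erase_of_mem huF, hFc]
    · simp
    · grind
    · rw [Finset.insert_erase huF]; exact hF

theorem CSetup.cmem_w {K : SComplex} {u v w : ℕ} (h : CSetup K u v w) {τ : Finset ℕ} (hw : w ∉ τ) :
    CMem K u v w (insert w τ) ↔ u ∉ τ ∧ v ∉ τ ∧ (insert u τ ∈ K.faces ∨ insert v τ ∈ K.faces) := by
  have h1 := h.wu
  have h2 := h.wv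
  unfold CMem
  rw [Finset.erase_insert hw]
  simp only [Finset.mem_insert, not_or, true_or, not_true, false_and, true_and, false_or]
  constructor
  · rintro ⟨h1, h2, h3⟩; exact ⟨h1.2, h2.2, h3⟩
  · rintro ⟨h1, h2, h3⟩; exact ⟨⟨by grind, h1⟩, ⟨by grind, h2⟩, h3⟩

theorem cmem_nw {K : SComplex} {u v w : ℕ} {τ : Finset ℕ} (hw : w ∉ τ) :
    CMem K u v w τ ↔ u ∉ τ ∧ v ∉ τ ∧ τ ∈ K.faces := by
  unfold CMem
  simp [hw]

theorem CSetup.pure_w {K K₁ : SComplex} {u v w : ℕ} (h : CSetup K u v w)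
    (hM : ∀ α, α ∈ K₁.faces ↔ CMem K u v w α) {s : Finset ℕ} (hu : u ∉ s) (hv : v ∉ s)
    (hs : insert u s ∈ K.faces) : ∃ F ∈ K₁.faces, insert w s ⊆ F ∧ F.card = 4 := by
  obtain ⟨r, hsr, hrc, hur, hvr, hrK⟩ := h.good.avoid h.ne hu hv hs
  have hwr : w ∉ r := fun hh => h.fresh _ hrK (by simp [hh])
  refine ⟨insert w r, ?_, Finset.insert_subset_insert _ hsr, ?_⟩
  · rw [hM, h.cmem_w hwr]
    exact ⟨hur, hvr, Or.inl hrK⟩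
  · rw [Finset.card_insert_of_notMem hwr, hrc]

theorem CSetup.pure' {K K₁ : SComplex} {u v w : ℕ} (h : CSetup K u v w)
    (hM : ∀ α, α ∈ K₁.faces ↔ CMem K u v w α) {s : Finset ℕ} (hs : s ∈ K₁.faces) :
    ∃ F ∈ K₁.faces, s ⊆ F ∧ F.card = 4 := by
  have hM' : ∀ α, α ∈ K₁.faces ↔ CMem K v u w α := fun α => (hM α).trans ⟨CMem.symm, CMem.symm⟩
  by_cases hw : w ∈ s
  · obtain ⟨τ, hτ, rfl⟩ : ∃ τ, w ∉ τ ∧ s = insert w τ :=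
      ⟨s.erase w, by simp, (Finset.insert_erase hw).symm⟩
    rw [hM, h.cmem_w hτ] at hs
    obtain ⟨hu, hv, h1 | h1⟩ := hs
    · exact h.pure_w hM hu hv h1
    · exact h.symm.pure_w hM' hv hu h1
  · have hs' := hs
    rw [hM, cmem_nw hw] at hs'
    obtain ⟨hu, hv, h1⟩ := hs'
    obtain ⟨F, hF, hsF, hFc⟩ := h.good.pure s h1
    by_cases huF : u ∈ F
    · obtain ⟨G, hG, h2, h3⟩ := h.pure_w hM hu hv (K.dc hF (Finset.insert_subset huF hsF) (by simp))
      exact ⟨G, hG, (Finset.subset_insert _ _).trans h2, h3⟩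
    by_cases hvF : v ∈ F
    · obtain ⟨G, hG, h2, h3⟩ := h.symm.pure_w hM' hv hu
        (K.dc hF (Finset.insert_subset hvF hsF) (by simp))
      exact ⟨G, hG, (Finset.subset_insert _ _).trans h2, h3⟩
    refine ⟨F, ?_, hsF, hFc⟩
    rw [hM, cmem_nw (h.fresh F hF)]
    exact ⟨huF, hvF, hF⟩

theorem CSetup.dim' {K K₁ : SComplex} {u v w : ℕ} (h : CSetup K u v w)
    (hM : ∀ α, α ∈ K₁.faces ↔ CMem K u v w α) {s : Finset ℕ} (hs : s ∈ K₁.faces) :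
    s.card ≤ 4 := by
  by_cases hw : w ∈ s
  · obtain ⟨τ, hτ, rfl⟩ : ∃ τ, w ∉ τ ∧ s = insert w τ :=
      ⟨s.erase w, by simp, (Finset.insert_erase hw).symm⟩
    rw [hM, h.cmem_w hτ] at hs
    rw [Finset.card_insert_of_notMem hτ]
    obtain ⟨hu, hv, h1 | h1⟩ := hs
    · have := h.good.dim _ h1
      rwa [Finset.card_insert_of_notMem hu] at this
    · have := h.good.dim _ h1
      rwa [Finset.card_insert_of_notMem hv] at this
  · rw [hM, cmem_nw hw] at hs
    exact h.good.dim _ hs.2.2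

/-- The contraction map on vertices. -/
def cmap (u v w z : ℕ) : ℕ := if z = u ∨ z = v then w else z

theorem CSetup.two_one {K K₁ : SComplex} {u v w : ℕ} (h : CSetup K u v w)
    (hM : ∀ α, α ∈ K₁.faces ↔ CMem K u v w α) {s : Finset ℕ} (hu : u ∉ s) (hv : v ∉ s)
    (hw : w ∉ s) (hc : s.card = 2)
    (h1 : insert u s ∈ K.faces) (h2 : insert v s ∉ K.faces) : K₁.TwoExt (insert w s) := by
  obtain ⟨x, y, hxy, hx, hy, hh⟩ := h.good.two _ h1 (by rw [Finset.card_insert_of_notMem hu, hc])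
  have aux : ∀ z, z ∉ insert u s → insert z (insert u s) ∈ K.faces → z ≠ w ∧ z ≠ v := by
    intro z hz hzK
    refine ⟨?_, ?_⟩
    · rintro rfl; exact h.fresh _ hzK (by simp)
    · rintro rfl; exact h2 (K.dc hzK (by grind) (by simp))
  have ax := aux x hx ((hh x hx).mpr (Or.inl rfl))
  have ay := aux y hy ((hh y hy).mpr (Or.inr rfl))
  refine ⟨x, y, hxy, by grind, by grind, fun z hz => ?_⟩
  have hzw : z ≠ w := by grind
  have hzs : z ∉ s := by grind
  rw [Finset.insert_comm, hM, h.cmem_w (by grind)]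
  have h3 : insert v (insert z s) ∉ K.faces := fun hk => h2 (K.dc hk (by grind) (by simp))
  by_cases hzu : z = u
  · subst hzu
    have : ¬ (z = x ∨ z = y) := by grind
    simp [this]
  by_cases hzv : z = v
  · subst hzv
    have : ¬ (z = x ∨ z = y) := by grind
    simp [this]
  rw [← hh z (by grind), Finset.insert_comm z u]
  have : u ∉ insert z s := by grind
  have : v ∉ insert z s := by grind
  tauto

theorem CSetup.two' {K K₁ : SComplex} {u v w : ℕ} (h : CSetup K u v w)
    (hM : ∀ α, α ∈ K₁.faces ↔ CMem K u v w α) {t : Finset ℕ} (ht : t ∈ K₁.faces)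
    (hc : t.card = 3) : K₁.TwoExt t := by
  have hM' : ∀ α, α ∈ K₁.faces ↔ CMem K v u w α := fun α => (hM α).trans ⟨CMem.symm, CMem.symm⟩
  have hwu := h.wu
  have hwv := h.wv
  have huv := h.ne
  by_cases hw : w ∈ t
  · obtain ⟨s, hs, rfl⟩ : ∃ τ, w ∉ τ ∧ t = insert w τ :=
      ⟨t.erase w, by simp, (Finset.insert_erase hw).symm⟩
    rw [hM, h.cmem_w hs] at ht
    rw [Finset.card_insert_of_notMem hs] at hc
    have hc2 : s.card = 2 := by omega
    obtain ⟨hu, hv, h1⟩ := ht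
    by_cases hku : insert u s ∈ K.faces
    · by_cases hkv : insert v s ∈ K.faces
      · have hkuv := h.lc s (by rw [← Finset.card_pos]; omega) hu hv hku hkv
        have other : ∀ u v, u ∉ s → v ∉ s → u ≠ v → insert u s ∈ K.faces →
            insert u (insert v s) ∈ K.faces →
            ∃ x, x ≠ v ∧ x ≠ u ∧ x ∉ s ∧ ∀ z, z ∉ s → z ≠ u → z ≠ v →
              (insert u (insert z s) ∈ K.faces ↔ z = x) := by
          intro u v hu hv huv hku hkuv
          obtain ⟨x, y, hxy, hx, hy, hh⟩ := h.good.two _ hku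
            (by rw [Finset.card_insert_of_notMem hu, hc2])
          have hvm := (hh v (by grind)).mp (by rwa [Finset.insert_comm])
          rcases hvm with rfl | rfl
          · refine ⟨y, hxy.symm, by grind, by grind, fun z hz hzu hzv => ?_⟩
            rw [Finset.insert_comm, hh z (by grind)]; grind
          · refine ⟨x, hxy, by grind, by grind, fun z hz hzu hzv => ?_⟩
            rw [Finset.insert_comm, hh z (by grind)]; grind
        obtain ⟨x, hxv, hxu, hxs, hx⟩ := other u v hu hv huv hku hkuv
        obtain ⟨y, hyu, hyv, hys, hy⟩ := other v u hv hu huv.symm hkv (by rwa [Finset.insert_comm])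
        have kx := (hx x hxs hxu hxv).mpr rfl
        have ky := (hy y hys hyv hyu).mpr rfl
        have hxw : x ≠ w := by rintro rfl; exact h.fresh _ kx (by simp)
        have hyw : y ≠ w := by rintro rfl; exact h.fresh _ ky (by simp)
        refine ⟨x, y, ?_, by grind, by grind, fun z hz => ?_⟩
        · rintro rfl
          exact h.notBoth (by rw [Finset.card_insert_of_notMem hxs, hc2]) (by grind) (by grind) kx ky
        · have hzw : z ≠ w := by grind
          have hzs : z ∉ s := by grind
          rw [Finset.insert_comm, hM, h.cmem_w (by grind)]
          by_cases hzu : z = u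
          · subst hzu
            have : ¬ (z = x ∨ z = y) := by grind
            simp [this]
          by_cases hzv : z = v
          · subst hzv
            have : ¬ (z = x ∨ z = y) := by grind
            simp [this]
          rw [hx z hzs hzu hzv, hy z hzs hzv hzu]
          have : u ∉ insert z s := by grind
          have : v ∉ insert z s := by grind
          tauto
      · exact h.two_one hM hu hv hs hc2 hku hkv
    · exact h.symm.two_one hM' hv hu hs hc2 (by tauto) hku
  · rw [hM, cmem_nw hw] at ht
    obtain ⟨hu, hv, h1⟩ := ht
    obtain ⟨x, y, hxy, hx, hy, hh⟩ := h.good.two _ h1 hc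
    have kx := (hh x hx).mpr (Or.inl rfl)
    have ky := (hh y hy).mpr (Or.inr rfl)
    have hxw : x ≠ w := by rintro rfl; exact h.fresh _ kx (by simp)
    have hyw : y ≠ w := by rintro rfl; exact h.fresh _ ky (by simp)
    have hnb : ¬ (insert u t ∈ K.faces ∧ insert v t ∈ K.faces) :=
      fun hh => h.notBoth hc hu hv hh.1 hh.2
    rw [hh u hu, hh v hv] at hnb
    refine ⟨cmap u v w x, cmap u v w y, ?_, ?_, ?_, fun z hz => ?_⟩
    · unfold cmap; grind
    · unfold cmap; grind
    · unfold cmap; grind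
    · by_cases hzw : z = w
      · subst hzw
        rw [hM, h.cmem_w hw, hh u hu, hh v hv]
        unfold cmap; grind
      · have : w ∉ insert z t := by grind
        rw [hM, cmem_nw this, hh z hz]
        unfold cmap; grind

theorem CSetup.conn_nw {K K₁ : SComplex} {u v w : ℕ} (h : CSetup K u v w)
    (hM : ∀ α, α ∈ K₁.faces ↔ CMem K u v w α) {σ : Finset ℕ} (hσ : σ ∈ K₁.faces ∨ σ = ∅)
    (hw : w ∉ σ) (hc : σ.card ≤ 2) : K₁.LConn σ := by
  have hwu := h.wu
  have hwv := h.wv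
  have hu : u ∉ σ := by
    rcases hσ with hσ | rfl
    · exact ((hM σ).mp hσ).1
    · simp
  have hv : v ∉ σ := by
    rcases hσ with hσ | rfl
    · exact ((hM σ).mp hσ).2.1
    · simp
  have hσK : σ ∈ K.faces ∨ σ = ∅ := by
    rcases hσ with hσ | hσ
    · exact Or.inl ((cmem_nw hw).mp ((hM σ).mp hσ)).2.2
    · exact Or.inr hσ
  have hconn := h.good.conn σ hσK hc
  have pre : ∀ p, p ∉ σ → insert p σ ∈ K₁.faces →
      ∃ p', p' ∉ σ ∧ insert p' σ ∈ K.faces ∧ cmap u v w p' = p := by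
    intro p hp hpK
    by_cases hpw : p = w
    · subst hpw
      rw [hM, h.cmem_w hw] at hpK
      rcases hpK.2.2 with hk | hk
      · exact ⟨u, hu, hk, by simp [cmap]⟩
      · exact ⟨v, hv, hk, by simp [cmap]⟩
    · rw [hM, cmem_nw (by grind)] at hpK
      exact ⟨p, hp, hpK.2.2, by unfold cmap; grind⟩
  intro p q hp hpK hq hqK
  obtain ⟨p', hp', hpK', rfl⟩ := pre p hp hpK
  obtain ⟨q', hq', hqK', rfl⟩ := pre q hq hqK
  refine rtg_lift (cmap u v w) ?_ (hconn p' q' hp' hpK' hq' hqK')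
  intro a b hab
  obtain ⟨ha, hb, habK⟩ := hab
  have hwa : w ∉ insert a (insert b σ) := h.fresh _ habK
  have step : ∀ a b, a ∉ σ → b ∉ σ → insert a (insert b σ) ∈ K.faces → (a = u ∨ a = v) →
      b ≠ u → b ≠ v → w ≠ b → K₁.LAdj σ w b := by
    intro a b ha hb habK haa hbu hbv hwb
    refine ⟨hw, hb, ?_⟩
    rw [hM, h.cmem_w (by grind)]
    refine ⟨by grind, by grind, ?_⟩
    rcases haa with rfl | rfl <;> tauto
  by_cases haa : a = u ∨ a = v
  · by_cases hbb : b = u ∨ b = v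
    · have : cmap u v w a = cmap u v w b := by unfold cmap; grind
      rw [this]
    · have e1 : cmap u v w a = w := by unfold cmap; grind
      have e2 : cmap u v w b = b := by unfold cmap; grind
      rw [e1, e2]
      exact Relation.ReflTransGen.single (step a b ha hb habK haa (by grind) (by grind) (by grind))
  · by_cases hbb : b = u ∨ b = v
    · have e1 : cmap u v w a = a := by unfold cmap; grind
      have e2 : cmap u v w b = w := by unfold cmap; grind
      rw [e1, e2]
      rw [Finset.insert_comm] at habK
      exact Relation.ReflTransGen.single
        (step b a hb ha habK hbb (by grind) (by grind) (by grind)).symm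
    · have e1 : cmap u v w a = a := by unfold cmap; grind
      have e2 : cmap u v w b = b := by unfold cmap; grind
      rw [e1, e2]
      refine Relation.ReflTransGen.single ⟨ha, hb, ?_⟩
      rw [hM, cmem_nw hwa]
      exact ⟨by grind, by grind, habK⟩

theorem Good.to_nbr {K : SComplex} (h : K.Good) {ρ : Finset ℕ} (hρ : ρ ∈ K.faces) (hc : ρ.card ≤ 2)
    {v p : ℕ} (hv : v ∉ ρ) (hvK : insert v ρ ∈ K.faces) (hp : p ∉ ρ) (hpv : p ≠ v)
    (hpK : insert p ρ ∈ K.faces) :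
    ∃ y, y ≠ v ∧ K.LAdj ρ y v ∧
      Relation.ReflTransGen (fun a b => K.LAdj ρ a b ∧ a ≠ v ∧ b ≠ v) p y := by
  have path := h.conn ρ (Or.inl hρ) hc p v hp hpK hv hvK
  have key : ∀ a, Relation.ReflTransGen (K.LAdj ρ) a v → a = v ∨ ∃ y, y ≠ v ∧ K.LAdj ρ y v ∧
      Relation.ReflTransGen (fun a b => K.LAdj ρ a b ∧ a ≠ v ∧ b ≠ v) a y := by
    intro a ha
    induction ha using Relation.ReflTransGen.head_induction_on with
    | refl => exact Or.inl rfl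
    | head hac _ ih =>
      rename_i a c _
      by_cases hav : a = v
      · exact Or.inl hav
      right
      by_cases hcv : c = v
      · subst hcv
        exact ⟨a, hav, hac, Relation.ReflTransGen.refl⟩
      · rcases ih with ih | ⟨y, h1, h2, h3⟩
        · exact absurd ih hcv
        · exact ⟨y, h1, h2, Relation.ReflTransGen.head ⟨hac, hav, hcv⟩ h3⟩
  rcases key p path with hh | hh
  · exact absurd hh hpv
  · exact hh

/-- An edge of the link of `u τ` avoiding `v` gives an edge of the link of `w τ`. -/
theorem CSetup.adj_w {K K₁ : SComplex} {u v w : ℕ} (h : CSetup K u v w)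
    (hM : ∀ α, α ∈ K₁.faces ↔ CMem K u v w α) {τ : Finset ℕ} (hu : u ∉ τ) (hv : v ∉ τ)
    {a b : ℕ} (hab : K.LAdj (insert u τ) a b) (hav : a ≠ v) (hbv : b ≠ v) :
    K₁.LAdj (insert w τ) a b := by
  obtain ⟨h1, h2, h3⟩ := hab
  have hwa := h.fresh _ h3
  refine ⟨by grind, by grind, ?_⟩
  have : insert a (insert b (insert w τ)) = insert w (insert a (insert b τ)) := by grind
  rw [this, hM, h.cmem_w (by grind)]
  refine ⟨by grind, by grind, Or.inl ?_⟩
  have : insert u (insert a (insert b τ)) = insert a (insert b (insert u τ)) := by grind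
  rw [this]; exact h3

theorem CSetup.conn_one {K K₁ : SComplex} {u v w : ℕ} (h : CSetup K u v w)
    (hM : ∀ α, α ∈ K₁.faces ↔ CMem K u v w α) {τ : Finset ℕ} (hu : u ∉ τ) (hv : v ∉ τ)
    (hw : w ∉ τ) (hc : τ.card ≤ 1) (h1 : insert u τ ∈ K.faces) (h2 : insert v τ ∉ K.faces) :
    K₁.LConn (insert w τ) := by
  have hno : ∀ s ∈ K.faces, τ ⊆ s → v ∉ s := by
    intro s hs hτ hvs
    exact h2 (K.dc hs (by grind) (by simp))
  have pre : ∀ p, p ∉ insert w τ → insert p (insert w τ) ∈ K₁.faces →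
      p ∉ insert u τ ∧ insert p (insert u τ) ∈ K.faces := by
    intro p hp hpK
    rw [Finset.insert_comm, hM, h.cmem_w (by grind)] at hpK
    obtain ⟨ha, hb, hk | hk⟩ := hpK
    · exact ⟨by grind, by rwa [Finset.insert_comm]⟩
    · exact absurd (Finset.mem_insert_self v _) (hno _ hk (by grind))
  intro p q hp hpK hq hqK
  obtain ⟨a1, a2⟩ := pre p hp hpK
  obtain ⟨b1, b2⟩ := pre q hq hqK
  refine rtg_lift id ?_ (h.good.conn _ (Or.inl h1) (by rw [Finset.card_insert_of_notMem hu]; omega)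
    p q a1 a2 b1 b2)
  intro a b hab
  have hvn := hno _ hab.2.2 (by grind)
  exact Relation.ReflTransGen.single (h.adj_w hM hu hv hab (by grind) (by grind))

theorem CSetup.conn_uv {K K₁ : SComplex} {u v w : ℕ} (h : CSetup K u v w)
    (hM : ∀ α, α ∈ K₁.faces ↔ CMem K u v w α) {τ : Finset ℕ} (hu : u ∉ τ) (hv : v ∉ τ)
    (hc : τ.card ≤ 1) {y z : ℕ} (hyu : y ≠ u) (hzu : z ≠ u) (hyv : y ≠ v) (hzv : z ≠ v)
    (hy : K.LAdj (insert u τ) y v) (hz : K.LAdj (insert u τ) z v) :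
    Relation.ReflTransGen (K₁.LAdj (insert w τ)) y z := by
  have huv := h.ne
  by_cases hyz : y = z
  · rw [hyz]
  by_cases h0 : τ = ∅
  · subst h0
    have e : insert v (insert u ∅) ∈ K.faces := by rw [Finset.insert_comm]; exact h.uv
    have path := h.good.conn _ (Or.inl e) (Finset.card_pair huv.symm).le y z
      (by grind) hy.2.2 (by grind) hz.2.2
    refine rtg_lift id ?_ path
    rintro a b ⟨ha, hb, hab⟩
    refine Relation.ReflTransGen.single (h.adj_w hM hu hv ⟨by grind, by grind, ?_⟩ (by grind) (by grind))
    exact K.dc hab (by grind) (by simp)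
  · have hc1 : τ.card = 1 := by
      have := Finset.card_pos.mpr (Finset.nonempty_iff_ne_empty.mpr h0); omega
    have := h.good.handshake (σ := insert u τ) (by rw [Finset.card_insert_of_notMem hu, hc1]) hyz
      hyv.symm hzv.symm hy.symm hz.symm
    refine rtg_lift id ?_ this
    rintro a b ⟨hab, hav, hbv⟩
    exact Relation.ReflTransGen.single (h.adj_w hM hu hv hab hav hbv)

theorem CSetup.reach {K K₁ : SComplex} {u v w : ℕ} (h : CSetup K u v w)
    (hM : ∀ α, α ∈ K₁.faces ↔ CMem K u v w α) {τ : Finset ℕ} (hu : u ∉ τ) (hv : v ∉ τ)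
    (hc : τ.card ≤ 1) (huvK : insert u (insert v τ) ∈ K.faces) {p : ℕ} (hp : p ∉ τ) (hpu : p ≠ u)
    (hpv : p ≠ v) (hpK : insert u (insert p τ) ∈ K.faces) :
    ∃ y, y ≠ u ∧ y ≠ v ∧ K.LAdj (insert u τ) y v ∧
      Relation.ReflTransGen (K₁.LAdj (insert w τ)) p y := by
  have huv := h.ne
  obtain ⟨y, hyv, hy, hpath⟩ := h.good.to_nbr (ρ := insert u τ) (K.dc huvK (by grind) (by simp))
    (by rw [Finset.card_insert_of_notMem hu]; omega) (v := v) (p := p) (by grind)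
    (by rwa [Finset.insert_comm]) (by grind) hpv (by rwa [Finset.insert_comm])
  refine ⟨y, by have := hy.1; grind, hyv, hy, ?_⟩
  refine rtg_lift id ?_ hpath
  rintro a b ⟨hab, hav, hbv⟩
  exact Relation.ReflTransGen.single (h.adj_w hM hu hv hab hav hbv)

theorem CSetup.conn_w {K K₁ : SComplex} {u v w : ℕ} (h : CSetup K u v w)
    (hM : ∀ α, α ∈ K₁.faces ↔ CMem K u v w α) {τ : Finset ℕ} (hw : w ∉ τ)
    (hσ : insert w τ ∈ K₁.faces) (hc : τ.card ≤ 1) : K₁.LConn (insert w τ) := by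
  have hM' : ∀ α, α ∈ K₁.faces ↔ CMem K v u w α := fun α => (hM α).trans ⟨CMem.symm, CMem.symm⟩
  have huv := h.ne
  rw [hM, h.cmem_w hw] at hσ
  obtain ⟨hu, hv, hor⟩ := hσ
  by_cases huvK : insert u (insert v τ) ∈ K.faces
  · have huvK' : insert v (insert u τ) ∈ K.faces := by rwa [Finset.insert_comm]
    have reach : ∀ p, p ∉ insert w τ → insert p (insert w τ) ∈ K₁.faces →
        ∃ y, y ≠ u ∧ y ≠ v ∧ K.LAdj (insert u τ) y v ∧
          Relation.ReflTransGen (K₁.LAdj (insert w τ)) p y := by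
      intro p hp hpK
      rw [Finset.insert_comm, hM, h.cmem_w (by grind)] at hpK
      obtain ⟨ha, hb, hk | hk⟩ := hpK
      · exact h.reach hM hu hv hc huvK (by grind) (by grind) (by grind) hk
      · obtain ⟨y, h1, h2, h3, h4⟩ := h.symm.reach hM' hv hu hc huvK' (p := p)
          (by grind) (by grind) (by grind) hk
        refine ⟨y, h2, h1, ?_, h4⟩
        refine ⟨by have := h3.1; grind, by grind, ?_⟩
        have e : insert y (insert v (insert u τ)) = insert y (insert u (insert v τ)) := by grind
        rw [e]; exact h3.2.2
    intro p q hp hpK hq hqK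
    obtain ⟨y, h1, h2, h3, h4⟩ := reach p hp hpK
    obtain ⟨z, k1, k2, k3, k4⟩ := reach q hq hqK
    exact (h4.trans (h.conn_uv hM hu hv hc h1 k1 h2 k2 h3 k3)).trans
      (rtg_symm_s3 (fun a b => LAdj.symm) k4)
  · have hne : τ.Nonempty := by
      rw [Finset.nonempty_iff_ne_empty]
      rintro rfl
      exact huvK h.uv
    by_cases hku : insert u τ ∈ K.faces
    · exact h.conn_one hM hu hv hw hc hku (fun hkv => huvK (h.lc τ hne hu hv hku hkv))
    · exact h.symm.conn_one hM' hv hu hw hc (by tauto) hku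

theorem CSetup.good' {K K₁ : SComplex} {u v w : ℕ} (h : CSetup K u v w)
    (hM : ∀ α, α ∈ K₁.faces ↔ CMem K u v w α) : K₁.Good where
  ne := by
    refine ⟨insert w ∅, ?_⟩
    rw [hM, h.cmem_w (by simp)]
    exact ⟨by simp, by simp, Or.inl (K.dc h.uv (by grind) (by simp))⟩
  pure := fun s hs => h.pure' hM hs
  dim := fun s hs => h.dim' hM hs
  two := fun s hs hc => h.two' hM hs hc
  conn := by
    intro σ hσ hc
    by_cases hw : w ∈ σ
    · obtain ⟨τ, hτ, rfl⟩ : ∃ τ, w ∉ τ ∧ σ = insert w τ :=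
        ⟨σ.erase w, by simp, (Finset.insert_erase hw).symm⟩
      rw [Finset.card_insert_of_notMem hτ] at hc
      refine h.conn_w hM hτ ?_ (by omega)
      rcases hσ with hσ | hσ
      · exact hσ
      · simp at hσ
    · exact h.conn_nw hM hσ hw hc

/-- The faces produced by the contraction. -/
def cfaces (K : SComplex) (u v w : ℕ) : Finset (Finset ℕ) :=
  (K.faces.filter fun α => u ∉ α ∧ v ∉ α) ∪
      coneFaces w (bdryFaces (K.faces.filter fun α => u ∉ α ∧ v ∉ α) 3)

theorem CSetup.bdry_aux {K : SComplex} {u v w : ℕ} (h : CSetup K u v w) {s : Finset ℕ}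
    (hs : s.Nonempty) (hu : u ∉ s) (hv : v ∉ s) (h1 : insert u s ∈ K.faces) :
    s ∈ bdryFaces (K.faces.filter fun α => u ∉ α ∧ v ∉ α) 3 := by
  obtain ⟨r, hsr, hrc, hur, hvr, hrK⟩ := h.good.avoid h.ne hu hv h1
  have hr : r ∈ K.faces := K.dc hrK (by simp) (by rw [← Finset.card_pos]; omega)
  simp only [bdryFaces, Finset.mem_filter]
  refine ⟨⟨K.dc hr hsr hs, hu, hv⟩, r, ⟨hr, hur, hvr⟩, hsr, hrc, ?_⟩
  obtain ⟨x, y, hxy, hx, hy, hh⟩ := h.good.two r hr hrc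
  have huo := (hh u hur).mp hrK
  have hnv : ¬ (v = x ∨ v = y) := by
    rw [← hh v hvr]
    exact fun hk => h.notBoth hrc hur hvr hrK hk
  have : ∃ t, t ∉ r ∧ t ≠ u ∧ t ≠ v ∧ ∀ z, z ∉ r → (insert z r ∈ K.faces ↔ z = u ∨ z = t) := by
    rcases huo with rfl | rfl
    · exact ⟨y, hy, by grind, by grind, hh⟩
    · exact ⟨x, hx, by grind, by grind, fun z hz => by rw [hh z hz, or_comm]⟩
  obtain ⟨t, ht, htu, htv, hh⟩ := this
  rw [Finset.card_eq_one]
  refine ⟨insert t r, ?_⟩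
  ext F
  simp only [Finset.mem_filter, Finset.mem_singleton]
  constructor
  · rintro ⟨⟨hF, huF, hvF⟩, hFc, hrF⟩
    obtain ⟨z, hz, rfl⟩ := eq_insert_of_card hrF (by omega)
    rcases (hh z hz).mp hF with rfl | rfl
    · simp at huF
    · rfl
  · rintro rfl
    exact ⟨⟨(hh t ht).mpr (Or.inr rfl), by grind, by grind⟩,
      by rw [Finset.card_insert_of_notMem ht, hrc], by simp⟩

theorem CSetup.bdry {K : SComplex} {u v w : ℕ} (h : CSetup K u v w) (s : Finset ℕ) :
    s ∈ bdryFaces (K.faces.filter fun α => u ∉ α ∧ v ∉ α) 3 ↔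
      s.Nonempty ∧ u ∉ s ∧ v ∉ s ∧ (insert u s ∈ K.faces ∨ insert v s ∈ K.faces) := by
  constructor
  · intro hs
    simp only [bdryFaces, Finset.mem_filter] at hs
    obtain ⟨⟨hsK, hu, hv⟩, r, ⟨hr, hur, hvr⟩, hsr, hrc, hone⟩ := hs
    refine ⟨?_, hu, hv, ?_⟩
    · rw [Finset.nonempty_iff_ne_empty]
      rintro rfl
      exact K.not_empty_mem hsK
    by_contra hcon
    push Not at hcon
    have hr2 := (K.twoExt_iff r hrc).mpr (h.good.two r hr hrc)
    have hsub : (K.faces.filter fun F => F.card = 3 + 1 ∧ r ⊆ F) ⊆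
        ((K.faces.filter fun α => u ∉ α ∧ v ∉ α).filter fun t => t.card = 3 + 1 ∧ r ⊆ t) := by
      intro F hF
      simp only [Finset.mem_filter] at hF ⊢
      refine ⟨⟨hF.1, fun hh => hcon.1 ?_, fun hh => hcon.2 ?_⟩, hF.2⟩
      · exact K.dc hF.1 (Finset.insert_subset hh (hsr.trans hF.2.2)) (by simp)
      · exact K.dc hF.1 (Finset.insert_subset hh (hsr.trans hF.2.2)) (by simp)
    have := Finset.card_le_card hsub
    omega
  · rintro ⟨hs, hu, hv, h1 | h1⟩
    · exact h.bdry_aux hs hu hv h1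
    · have := h.symm.bdry_aux hs hv hu h1
      have e : (fun α : Finset ℕ => u ∉ α ∧ v ∉ α) = fun α => v ∉ α ∧ u ∉ α := by
        funext α; rw [and_comm]
      simp only [and_comm] at this ⊢
      exact this

theorem CSetup.mem_cfaces {K : SComplex} {u v w : ℕ} (h : CSetup K u v w) (α : Finset ℕ) :
    α ∈ cfaces K u v w ↔ CMem K u v w α := by
  have hsub : ∀ s, u ∉ s → v ∉ s → s.Nonempty → (insert u s ∈ K.faces ∨ insert v s ∈ K.faces) →
      s ∈ K.faces := by
    rintro s _ _ hs (h1 | h1)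
    · exact K.dc h1 (by simp) hs
    · exact K.dc h1 (by simp) hs
  simp only [cfaces, coneFaces, Finset.mem_union, Finset.mem_filter, Finset.mem_image, h.bdry,
    Finset.mem_singleton]
  by_cases hw : w ∈ α
  · obtain ⟨τ, hτ, rfl⟩ : ∃ τ, w ∉ τ ∧ α = insert w τ :=
      ⟨α.erase w, by simp, (Finset.insert_erase hw).symm⟩
    rw [h.cmem_w hτ]
    constructor
    · rintro (⟨h1, _⟩ | (⟨h1, h2, h3, h4⟩ | ⟨s, ⟨h1, h2, h3, h4⟩, h5⟩) | h1)
      · exact absurd hw (h.fresh _ h1)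
      · exact absurd hw (h.fresh _ (hsub _ h2 h3 h1 h4))
      · have hws := h.fresh _ (hsub _ h2 h3 h1 h4)
        have : s = τ := by rw [← Finset.erase_insert hws, h5, Finset.erase_insert hτ]
        subst this
        exact ⟨h2, h3, h4⟩
      · have : τ = ∅ := by
          have e : insert w τ = insert w ∅ := h1
          rw [← Finset.erase_insert hτ, e, Finset.erase_insert (by simp)]
        subst this
        exact ⟨by simp, by simp, Or.inl (K.dc h.uv (by grind) (by simp))⟩
    · rintro ⟨h1, h2, h3⟩
      by_cases h0 : τ = ∅
      · subst h0; right; right; rfl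
      · exact Or.inr (Or.inl (Or.inr ⟨τ, ⟨Finset.nonempty_iff_ne_empty.mpr h0, h1, h2, h3⟩, rfl⟩))
  · rw [cmem_nw hw]
    constructor
    · rintro (⟨h1, h2, h3⟩ | (⟨h1, h2, h3, h4⟩ | ⟨s, ⟨h1, h2, h3, h4⟩, h5⟩) | h1)
      · exact ⟨h2, h3, h1⟩
      · exact ⟨h2, h3, hsub _ h2 h3 h1 h4⟩
      · subst h5; simp at hw
      · subst h1; simp at hw
    · rintro ⟨h1, h2, h3⟩
      exact Or.inl ⟨h3, h1, h2⟩

/-- The contracted complex. -/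
def contr (K : SComplex) (u v w : ℕ) (h : CSetup K u v w) : SComplex where
  faces := cfaces K u v w
  not_empty_mem := by
    rw [h.mem_cfaces, cmem_nw (by simp)]
    exact fun hh => K.not_empty_mem hh.2.2
  down_closed := by
    intro s hs t hts ht
    have ht' := Finset.nonempty_iff_ne_empty.mpr ht
    rw [h.mem_cfaces] at hs ⊢
    obtain ⟨h1, h2, h3⟩ := hs
    refine ⟨fun hh => h1 (hts hh), fun hh => h2 (hts hh), ?_⟩
    by_cases hwt : w ∈ t
    · right
      refine ⟨hwt, ?_⟩
      rcases h3 with h3 | ⟨h3, h4 | h4⟩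
      · exact absurd (hts hwt) h3.1
      · exact Or.inl (K.dc h4 (by grind) (by simp))
      · exact Or.inr (K.dc h4 (by grind) (by simp))
    · left
      refine ⟨hwt, ?_⟩
      rcases h3 with h3 | ⟨h3, h4 | h4⟩
      · exact K.dc h3.2 hts ht'
      · exact K.dc h4 (by grind) ht'
      · exact K.dc h4 (by grind) ht'

theorem CSetup.fnum0 {K K₁ : SComplex} {u v w : ℕ} (h : CSetup K u v w)
    (hM : ∀ α, α ∈ K₁.faces ↔ CMem K u v w α) : K.fnum 0 ≤ K₁.fnum 0 + 1 := by
  unfold fnum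
  have hwm : insert w ∅ ∈ K₁.faces := by
    rw [hM, h.cmem_w (by simp)]
    exact ⟨by simp, by simp, Or.inl (K.dc h.uv (by grind) (by simp))⟩
  have hsub : (K.faces.filter fun s => s.card = 0 + 1) ⊆
      insert {u} (insert {v} ((K₁.faces.filter fun s => s.card = 0 + 1).erase {w})) := by
    intro s hs
    rw [Finset.mem_filter] at hs
    obtain ⟨x, rfl⟩ := Finset.card_eq_one.mp hs.2
    have hxw := h.fresh _ hs.1
    simp only [Finset.mem_insert, Finset.mem_erase, Finset.mem_filter, hM, cmem_nw hxw]
    by_cases hxu : x = u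
    · left; rw [hxu]
    by_cases hxv : x = v
    · right; left; rw [hxv]
    right; right
    refine ⟨?_, ⟨?_, ?_, hs.1⟩, hs.2⟩ <;> simp <;> grind
  have h1 := Finset.card_le_card hsub
  have hm : ({w} : Finset ℕ) ∈ K₁.faces.filter fun s => s.card = 0 + 1 := by
    rw [Finset.mem_filter]; exact ⟨hwm, by simp⟩
  have h2 := Finset.card_erase_add_one hm
  have h3 := Finset.card_insert_le ({u} : Finset ℕ)
    (insert {v} ((K₁.faces.filter fun s => s.card = 0 + 1).erase {w}))
  have h4 := Finset.card_insert_le ({v} : Finset ℕ)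
    ((K₁.faces.filter fun s => s.card = 0 + 1).erase {w})
  omega

theorem CSetup.fnum1 {K K₁ : SComplex} {u v w : ℕ} (h : CSetup K u v w)
    (hM : ∀ α, α ∈ K₁.faces ↔ CMem K u v w α) (N : Finset ℕ)
    (hN : ∀ a, a ∈ N → a ≠ u ∧ a ≠ v ∧ insert u (insert v {a}) ∈ K.faces) :
    K₁.fnum 1 + N.card + 1 ≤ K.fnum 1 := by
  have huv := h.ne
  unfold fnum
  set E := K.faces.filter fun s => s.card = 1 + 1 with hE
  set D : Finset (Finset ℕ) := insert {u, v} (N.image fun a => {v, a}) with hD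
  have hDc : D.card = N.card + 1 := by
    rw [hD, Finset.card_insert_of_notMem, Finset.card_image_of_injOn]
    · intro a ha b hb hab
      have h1 := hN a ha
      have : a ∈ ({v, b} : Finset ℕ) := by
        have : ({v, a} : Finset ℕ) = {v, b} := hab
        rw [← this]; simp
      grind
    · intro hm
      obtain ⟨a, ha, he⟩ := Finset.mem_image.mp hm
      have : u ∈ ({v, a} : Finset ℕ) := by rw [he]; simp
      have := hN a ha
      grind
  have hDE : D ⊆ E := by
    intro s hs
    rw [hD, Finset.mem_insert, Finset.mem_image] at hs
    rw [hE, Finset.mem_filter]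
    rcases hs with rfl | ⟨a, ha, rfl⟩
    · exact ⟨h.uv, Finset.card_pair huv⟩
    · have := hN a ha
      exact ⟨K.dc this.2.2 (by grind) (by simp), Finset.card_pair this.2.1.symm⟩
  have hsub : (K₁.faces.filter fun s => s.card = 1 + 1) ⊆ (E \ D).image (fun s => s.image (cmap u v w)) := by
    intro s hs
    rw [Finset.mem_filter] at hs
    obtain ⟨hsK, hsc⟩ := hs
    rw [Finset.mem_image]
    by_cases hw : w ∈ s
    · obtain ⟨τ, hτ, rfl⟩ : ∃ τ, w ∉ τ ∧ s = insert w τ :=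
        ⟨s.erase w, by simp, (Finset.insert_erase hw).symm⟩
      rw [Finset.card_insert_of_notMem hτ] at hsc
      obtain ⟨a, rfl⟩ := Finset.card_eq_one.mp (show τ.card = 1 by omega)
      rw [hM, h.cmem_w hτ] at hsK
      obtain ⟨hua, hva, hk⟩ := hsK
      rw [Finset.mem_singleton] at hua hva
      by_cases hku : insert u {a} ∈ K.faces
      · refine ⟨insert u {a}, ?_, ?_⟩
        · rw [Finset.mem_sdiff, hE, Finset.mem_filter, hD, Finset.mem_insert, Finset.mem_image]
          refine ⟨⟨hku, Finset.card_pair hua⟩, ?_⟩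
          rintro (he | ⟨b, hb, he⟩)
          · have : a ∈ ({u, v} : Finset ℕ) := by rw [← he]; simp
            grind
          · have : v ∈ ({u, a} : Finset ℕ) := by rw [← he]; simp
            grind
        · ext z; simp [cmap]; grind
      · have hkv : insert v {a} ∈ K.faces := by tauto
        refine ⟨insert v {a}, ?_, ?_⟩
        · rw [Finset.mem_sdiff, hE, Finset.mem_filter, hD, Finset.mem_insert, Finset.mem_image]
          refine ⟨⟨hkv, Finset.card_pair hva⟩, ?_⟩
          rintro (he | ⟨b, hb, he⟩)
          · have : a ∈ ({u, v} : Finset ℕ) := by rw [← he]; simp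
            grind
          · have h1 : a ∈ ({v, b} : Finset ℕ) := by rw [he]; simp
            have hab : a = b := by grind
            subst hab
            exact hku (K.dc (hN a hb).2.2 (by grind) (by simp))
        · ext z; simp [cmap]; grind
    · rw [hM, cmem_nw hw] at hsK
      refine ⟨s, ?_, ?_⟩
      · rw [Finset.mem_sdiff, hE, Finset.mem_filter, hD, Finset.mem_insert, Finset.mem_image]
        refine ⟨⟨hsK.2.2, hsc⟩, ?_⟩
        rintro (rfl | ⟨b, hb, rfl⟩)
        · simp at hsK
        · simp at hsK
      · have : Set.EqOn (cmap u v w) id s := by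
          intro z hz
          have hz' : z ∈ s := hz
          simp only [cmap, id]
          grind
        rw [Finset.image_congr this, Finset.image_id]
  have h1 := (Finset.card_le_card hsub).trans Finset.card_image_le
  rw [Finset.card_sdiff_of_subset hDE] at h1
  have := Finset.card_le_card hDE
  omega

/-- Everything needed for a bistellar 2-move on `uv` with triangle `T`. -/
structure BSetup (K : SComplex) (u v : ℕ) (T : Finset ℕ) : Prop where
  good : K.Good
  ne : u ≠ v
  hT : T.card = 3
  uT : u ∉ T
  vT : v ∉ T
  nT : T ∉ K.faces
  link : ∀ γ : Finset ℕ, u ∉ γ → v ∉ γ → (insert u (insert v γ) ∈ K.faces ↔ γ ⊆ T ∧ γ ≠ T)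

/-- Membership in the result of a bistellar move. -/
def BMem (K : SComplex) (u v : ℕ) (T α : Finset ℕ) : Prop :=
  (α ∈ K.faces ∧ ¬ (u ∈ α ∧ v ∈ α)) ∨ α = T ∨ α = insert u T ∨ α = insert v T

theorem BMem.symm {K : SComplex} {u v : ℕ} {T α : Finset ℕ} (h : BMem K u v T α) :
    BMem K v u T α := by
  unfold BMem at *; tauto

theorem BSetup.symm {K : SComplex} {u v : ℕ} {T : Finset ℕ} (h : BSetup K u v T) :
    BSetup K v u T where
  good := h.good
  ne := h.ne.symm
  hT := h.hT
  uT := h.vT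
  vT := h.uT
  nT := h.nT
  link := fun γ h1 h2 => by rw [Finset.insert_comm]; exact h.link γ h2 h1

theorem BSetup.notBoth {K : SComplex} {u v : ℕ} {T : Finset ℕ} (h : BSetup K u v T) {α : Finset ℕ}
    (hα : BMem K u v T α) : ¬ (u ∈ α ∧ v ∈ α) := by
  have h1 := h.ne
  have h2 := h.uT
  have h3 := h.vT
  rcases hα with hα | rfl | rfl | rfl
  · exact hα.2
  all_goals grind

/-- faces of `K` containing `u` and `v`. -/
theorem BSetup.split {K : SComplex} {u v : ℕ} {T : Finset ℕ} (h : BSetup K u v T) {F : Finset ℕ}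
    (hF : F ∈ K.faces) (hu : u ∈ F) (hv : v ∈ F) :
    ∃ γ, u ∉ γ ∧ v ∉ γ ∧ F = insert u (insert v γ) ∧ γ ⊆ T ∧ γ ≠ T := by
  have huv := h.ne
  have e : F = insert u (insert v ((F.erase u).erase v)) := by
    rw [Finset.insert_erase (by grind), Finset.insert_erase hu]
  refine ⟨(F.erase u).erase v, by grind, by grind, e, ?_⟩
  rw [← h.link _ (by grind) (by grind), ← e]
  exact hF

/-- Subsets of `insert u T` belong to the new complex. -/
theorem BSetup.sub {K : SComplex} {u v : ℕ} {T : Finset ℕ} (h : BSetup K u v T) {α : Finset ℕ}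
    (hα : α.Nonempty) (hs : α ⊆ insert u T) : BMem K u v T α := by
  have h2 := h.uT
  have h3 := h.vT
  have huv := h.ne
  have hvα : v ∉ α := fun hh => by have := hs hh; grind
  by_cases hT : α.erase u = T
  · by_cases hu : u ∈ α
    · right; right; left
      rw [← hT, Finset.insert_erase hu]
    · right; left
      rw [← hT, Finset.erase_eq_of_notMem hu]
  · left
    refine ⟨?_, fun hh => hvα hh.2⟩
    have := (h.link (α.erase u) (by simp) (by grind)).mpr ⟨by grind, hT⟩
    exact K.dc this (by grind) hα

theorem BSetup.pure' {K K' : SComplex} {u v : ℕ} {T : Finset ℕ} (h : BSetup K u v T)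
    (hM : ∀ α, α ∈ K'.faces ↔ BMem K u v T α) {s : Finset ℕ} (hs : s ∈ K'.faces) :
    ∃ F ∈ K'.faces, s ⊆ F ∧ F.card = 4 := by
  have hM' : ∀ α, α ∈ K'.faces ↔ BMem K v u T α := fun α => (hM α).trans ⟨BMem.symm, BMem.symm⟩
  have cu : (insert u T).card = 4 := by rw [Finset.card_insert_of_notMem h.uT, h.hT]
  have cv : (insert v T).card = 4 := by rw [Finset.card_insert_of_notMem h.vT, h.hT]
  have mu : insert u T ∈ K'.faces := (hM _).mpr (by simp [BMem])
  have mv : insert v T ∈ K'.faces := (hM _).mpr (by simp [BMem])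
  have hsB := (hM s).mp hs
  have hnb := h.notBoth hsB
  rcases hsB with hsB | rfl | rfl | rfl
  · obtain ⟨F, hF, hsF, hFc⟩ := h.good.pure s hsB.1
    by_cases hF2 : u ∈ F ∧ v ∈ F
    · obtain ⟨γ, h1, h2, rfl, h3, _⟩ := h.split hF hF2.1 hF2.2
      by_cases hus : v ∈ s
      · exact ⟨_, mv, by intro z hz; have := hsF hz; grind, cv⟩
      · exact ⟨_, mu, by intro z hz; have := hsF hz; grind, cu⟩
    · exact ⟨F, (hM F).mpr (Or.inl ⟨hF, hF2⟩), hsF, hFc⟩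
  · exact ⟨_, mu, by simp, cu⟩
  · exact ⟨_, mu, by simp, cu⟩
  · exact ⟨_, mv, by simp, cv⟩

theorem BSetup.two_u {K K' : SComplex} {u v : ℕ} {T : Finset ℕ} (h : BSetup K u v T)
    (hM : ∀ α, α ∈ K'.faces ↔ BMem K u v T α) {t : Finset ℕ} (htK : t ∈ K.faces) (hu : u ∈ t)
    (hv : v ∉ t) (hvt : insert v t ∈ K.faces) (hc : t.card = 3) : K'.TwoExt t := by
  have huT := h.uT
  have hvT := h.vT
  have huv := h.ne
  obtain ⟨γ, h1, h2, he, h3, h4⟩ := h.split hvt (by grind) (by simp)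
  have ht : t = insert u γ := by
    have : (insert v t).erase v = (insert u (insert v γ)).erase v := by rw [he]
    rw [Finset.erase_insert hv] at this
    rw [this]; grind
  subst ht
  rw [Finset.card_insert_of_notMem h1] at hc
  obtain ⟨c, hcγ, hTc⟩ := eq_insert_of_card h3 (by rw [h.hT]; omega)
  obtain ⟨x, y, hxy, hx, hy, hh⟩ := h.good.two _ htK (by rw [Finset.card_insert_of_notMem h1]; omega)
  have : ∃ x, x ≠ v ∧ x ∉ insert u γ ∧
      ∀ z, z ∉ insert u γ → (insert z (insert u γ) ∈ K.faces ↔ z = v ∨ z = x) := by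
    rcases (hh v hv).mp hvt with rfl | rfl
    · exact ⟨y, hxy.symm, hy, hh⟩
    · exact ⟨x, hxy, hx, fun z hz => by rw [hh z hz, or_comm]⟩
  obtain ⟨x, hxv, hx, hh⟩ := this
  have hxc : x ≠ c := by
    rintro rfl
    have := (hh x hx).mpr (Or.inr rfl)
    exact h.nT (K.dc this (by grind) (by rw [← Finset.card_pos, h.hT]; omega))
  refine ⟨x, c, hxc, hx, by grind, fun z hz => ?_⟩
  rw [hM]
  constructor
  · intro hB
    have hnb := h.notBoth hB
    rcases hB with hB | hB | hB | hB
    · rcases (hh z hz).mp hB.1 with rfl | rfl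
      · exact absurd ⟨by grind, by grind⟩ hB.2
      · exact Or.inl rfl
    · exfalso
      have : u ∈ T := by rw [← hB]; simp
      exact huT this
    · right
      have : z ∈ insert u T := by rw [← hB]; simp
      grind
    · exfalso
      have : u ∈ insert v T := by rw [← hB]; simp
      grind
  · rintro (rfl | rfl)
    · left
      exact ⟨(hh z hz).mpr (Or.inr rfl), by grind⟩
    · right; right; left
      rw [hTc, Finset.insert_comm]

theorem BSetup.two' {K K' : SComplex} {u v : ℕ} {T : Finset ℕ} (h : BSetup K u v T)
    (hM : ∀ α, α ∈ K'.faces ↔ BMem K u v T α) {t : Finset ℕ} (ht : t ∈ K'.faces)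
    (hc : t.card = 3) : K'.TwoExt t := by
  have hM' : ∀ α, α ∈ K'.faces ↔ BMem K v u T α := fun α => (hM α).trans ⟨BMem.symm, BMem.symm⟩
  have huT := h.uT
  have hvT := h.vT
  have huv := h.ne
  have cu : (insert u T).card = 4 := by rw [Finset.card_insert_of_notMem h.uT, h.hT]
  have cv : (insert v T).card = 4 := by rw [Finset.card_insert_of_notMem h.vT, h.hT]
  have hTne : T.Nonempty := by rw [← Finset.card_pos, h.hT]; omega
  have htB := (hM t).mp ht
  have hnb := h.notBoth htB
  rcases htB with htB | rfl | rfl | rfl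
  · by_cases hA : u ∈ t ∧ insert v t ∈ K.faces
    · exact h.two_u hM htB.1 hA.1 (by grind) hA.2 hc
    by_cases hB : v ∈ t ∧ insert u t ∈ K.faces
    · exact h.symm.two_u hM' htB.1 hB.1 (by grind) hB.2 hc
    obtain ⟨x, y, hxy, hx, hy, hh⟩ := h.good.two _ htB.1 hc
    refine ⟨x, y, hxy, hx, hy, fun z hz => ?_⟩
    rw [← hh z hz, hM]
    have htT : t ≠ T := fun e => h.nT (e ▸ htB.1)
    have bad : ∀ u v, u ∉ T → v ∉ T → v ∉ t → u ≠ v → (∀ γ : Finset ℕ, u ∉ γ → v ∉ γ →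
        (insert u (insert v γ) ∈ K.faces ↔ γ ⊆ T ∧ γ ≠ T)) → insert z t = insert u T →
        u ∈ t ∧ insert v t ∈ K.faces := by
      intro u v huT hvT hvt huv hl he
      have hut : u ∈ t := by
        by_contra hut
        have hsub : t ⊆ T := by
          intro a ha
          have : a ∈ insert u T := by rw [← he]; grind
          grind
        exact htT (Finset.eq_of_subset_of_card_le hsub (by rw [h.hT, hc]))
      refine ⟨hut, ?_⟩
      have := (hl (t.erase u) (by simp) (by grind)).mpr ⟨?_, ?_⟩
      · rw [Finset.insert_comm, Finset.insert_erase hut] at this; exact this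
      · intro a ha
        have : a ∈ insert u T := by rw [← he]; grind
        grind
      · intro e
        have := Finset.card_erase_of_mem hut
        rw [e, h.hT, hc] at this
        omega
    constructor
    · rintro (h1 | h1 | h1 | h1)
      · exact h1.1
      · have := Finset.card_insert_of_notMem hz
        rw [h1, h.hT, hc] at this; omega
      · have hvt : v ∉ t := by
          intro hvt
          have : v ∈ insert u T := by rw [← h1]; grind
          grind
        exact absurd (bad u v huT hvT hvt huv h.link h1) hA
      · have hut : u ∉ t := by
          intro hvt
          have : u ∈ insert v T := by rw [← h1]; grind
          grind
        exact absurd (bad v u hvT huT hut huv.symm h.symm.link h1) hB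
    · intro hk
      refine Or.inl ⟨hk, fun hb => ?_⟩
      by_cases hu : u ∈ t
      · have : z = v := by grind
        subst this
        exact hA ⟨hu, hk⟩
      · have : z = u := by grind
        subst this
        exact hB ⟨by grind, hk⟩
  · refine ⟨u, v, huv, huT, hvT, fun z hz => ?_⟩
    rw [hM]
    constructor
    · rintro (h1 | h1 | h1 | h1)
      · exact absurd (K.dc h1.1 (by simp) hTne) h.nT
      · exact absurd (by rw [← h1]; simp) hz
      · have : z ∈ insert u t := by rw [← h1]; simp
        grind
      · have : z ∈ insert v t := by rw [← h1]; simp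
        grind
    · rintro (rfl | rfl)
      · exact Or.inr (Or.inr (Or.inl rfl))
      · exact Or.inr (Or.inr (Or.inr rfl))
  · omega
  · omega

theorem BSetup.conn' {K K' : SComplex} {u v : ℕ} {T : Finset ℕ} (h : BSetup K u v T)
    (hM : ∀ α, α ∈ K'.faces ↔ BMem K u v T α) {σ : Finset ℕ} (hσ : σ ∈ K'.faces ∨ σ = ∅)
    (hc : σ.card ≤ 2) : K'.LConn σ := by
  have hM' : ∀ α, α ∈ K'.faces ↔ BMem K v u T α := fun α => (hM α).trans ⟨BMem.symm, BMem.symm⟩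
  have huT := h.uT
  have hvT := h.vT
  have huv := h.ne
  have cu : (insert u T).card = 4 := by rw [Finset.card_insert_of_notMem h.uT, h.hT]
  have cv : (insert v T).card = 4 := by rw [Finset.card_insert_of_notMem h.vT, h.hT]
  have hσK : σ ∈ K.faces ∨ σ = ∅ := by
    rcases hσ with hσ | hσ
    · rcases (hM σ).mp hσ with h1 | h1 | h1 | h1
      · exact Or.inl h1.1
      · rw [h1, h.hT] at hc; omega
      · rw [h1, cu] at hc; omega
      · rw [h1, cv] at hc; omega
    · exact Or.inr hσ
  have hnb : ¬ (u ∈ σ ∧ v ∈ σ) := by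
    rcases hσ with hσ | rfl
    · exact h.notBoth ((hM σ).mp hσ)
    · simp
  obtain ⟨c, hcT, hcσ⟩ : ∃ c ∈ T, c ∉ σ :=
    Finset.exists_mem_notMem_of_card_lt_card (by rw [h.hT]; omega)
  have subu : ∀ α : Finset ℕ, α.Nonempty → α ⊆ insert u T → α ∈ K'.faces :=
    fun α h1 h2 => (hM α).mpr (h.sub h1 h2)
  have subv : ∀ α : Finset ℕ, α.Nonempty → α ⊆ insert v T → α ∈ K'.faces :=
    fun α h1 h2 => (hM' α).mpr (h.symm.sub h1 h2)
  -- faces of `K` containing both endpoints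
  have inT : ∀ F ∈ K.faces, u ∈ F → v ∈ F → ∀ z ∈ F, z ≠ u → z ≠ v → z ∈ T := by
    intro F hF h1 h2 z hz hzu hzv
    obtain ⟨γ, _, _, rfl, h3, _⟩ := h.split hF h1 h2
    grind
  let sp : ℕ → Prop := fun p => (p = v ∧ u ∈ σ) ∨ (p = u ∧ v ∈ σ)
  classical
  let r : ℕ → ℕ := fun p => if sp p then c else p
  have old : ∀ p q, p ∉ σ → insert p σ ∈ K.faces → q ∉ σ → insert q σ ∈ K.faces →
      Relation.ReflTransGen (K'.LAdj σ) (r p) (r q) := by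
    intro p q hp hpK hq hqK
    refine rtg_lift r ?_ (h.good.conn σ hσK hc p q hp hpK hq hqK)
    -- an edge with a special endpoint
    have spec : ∀ a b, K.LAdj σ a b → sp a → ¬ sp b → a ≠ b → K'.LAdj σ c b := by
      rintro a b ⟨ha, hb, hab⟩ hsa hsb hne
      refine ⟨hcσ, hb, ?_⟩
      rcases hsa with ⟨rfl, hs⟩ | ⟨rfl, hs⟩
      · have hT := inT _ hab (by grind) (by grind)
        apply subu _ (by simp)
        intro z hz
        rw [Finset.mem_insert] at hz ⊢
        by_cases hzu : z = u
        · exact Or.inl hzu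
        right
        rcases hz with rfl | hz
        · exact hcT
        · exact hT z (by grind) hzu (by grind)
      · have hT := inT _ hab (by grind) (by grind)
        apply subv _ (by simp)
        intro z hz
        rw [Finset.mem_insert] at hz ⊢
        by_cases hzu : z = v
        · exact Or.inl hzu
        right
        rcases hz with rfl | hz
        · exact hcT
        · exact hT z (by grind) (by grind) hzu
    intro a b hab
    by_cases hne : a = b
    · rw [hne]
    by_cases hsa : sp a
    · by_cases hsb : sp b
      · simp only [r, hsa, hsb, if_true]
        exact Relation.ReflTransGen.refl
      · simp only [r, hsa, hsb, if_true, if_false]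
        exact Relation.ReflTransGen.single (spec a b hab hsa hsb hne)
    · by_cases hsb : sp b
      · simp only [r, hsa, hsb, if_true, if_false]
        exact Relation.ReflTransGen.single (spec b a hab.symm hsb hsa (Ne.symm hne)).symm
      · simp only [r, hsa, hsb, if_false]
        obtain ⟨ha, hb, habK⟩ := hab
        by_cases hboth : u ∈ insert a (insert b σ) ∧ v ∈ insert a (insert b σ)
        · have hT := inT _ habK hboth.1 hboth.2
          have hab' : (a = u ∧ b = v) ∨ (a = v ∧ b = u) := by
            simp only [sp] at hsa hsb
            grind
          have hu : u ∉ σ := by grind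
          have hv : v ∉ σ := by grind
          have hσT : ∀ z ∈ σ, z ∈ T := fun z hz => hT z (by grind) (by grind) (by grind)
          have e1 : K'.LAdj σ u c := ⟨hu, hcσ, subu _ (by simp) (by
            intro z hz; have := hσT z; grind)⟩
          have e2 : K'.LAdj σ v c := ⟨hv, hcσ, subv _ (by simp) (by
            intro z hz; have := hσT z; grind)⟩
          rcases hab' with ⟨rfl, rfl⟩ | ⟨rfl, rfl⟩
          · exact (Relation.ReflTransGen.single e1).tail e2.symm
          · exact (Relation.ReflTransGen.single e2).tail e1.symm
        · exact Relation.ReflTransGen.single ⟨ha, hb, (hM _).mpr (Or.inl ⟨habK, hboth⟩)⟩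
  have reach : ∀ p, p ∉ σ → insert p σ ∈ K'.faces → ∃ p', p' ∉ σ ∧ insert p' σ ∈ K.faces ∧
      Relation.ReflTransGen (K'.LAdj σ) p (r p') := by
    intro p hp hpK
    have hnb' := h.notBoth ((hM _).mp hpK)
    have hcp := Finset.card_insert_of_notMem hp
    rcases (hM _).mp hpK with h1 | h1 | h1 | h1
    · refine ⟨p, hp, h1.1, ?_⟩
      have : r p = p := by
        simp only [r, sp]
        rw [if_neg]
        grind
      rw [this]
    · have hu : u ∉ σ := fun hh => huT (by rw [← h1]; simp [hh])
      have hv : v ∉ σ := fun hh => hvT (by rw [← h1]; simp [hh])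
      have hσT : σ ⊆ T := by rw [← h1]; simp
      refine ⟨u, hu, ?_, ?_⟩
      · have := (h.link σ hu hv).mpr ⟨hσT, fun e => by rw [e, h.hT] at hc; omega⟩
        exact K.dc this (by grind) (by simp)
      · have : r u = u := by
          simp only [r, sp]
          rw [if_neg]
          grind
        rw [this]
        exact Relation.ReflTransGen.single ⟨hp, hu, subu _ (by simp) (by
          rw [Finset.insert_comm, h1])⟩
    · rw [h1, cu] at hcp; omega
    · rw [h1, cv] at hcp; omega
  intro p q hp hpK hq hqK
  obtain ⟨p', h1, h2, h3⟩ := reach p hp hpK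
  obtain ⟨q', k1, k2, k3⟩ := reach q hq hqK
  exact (h3.trans (old p' q' h1 h2 k1 k2)).trans (rtg_symm_s3 (fun a b => LAdj.symm) k3)

theorem BSetup.good' {K K' : SComplex} {u v : ℕ} {T : Finset ℕ} (h : BSetup K u v T)
    (hM : ∀ α, α ∈ K'.faces ↔ BMem K u v T α) : K'.Good where
  ne := ⟨T, (hM T).mpr (Or.inr (Or.inl rfl))⟩
  pure := fun s hs => h.pure' hM hs
  dim := by
    intro s hs
    rcases (hM s).mp hs with h1 | h1 | h1 | h1
    · exact h.good.dim s h1.1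
    · rw [h1, h.hT]; omega
    · rw [h1, Finset.card_insert_of_notMem h.uT, h.hT]
    · rw [h1, Finset.card_insert_of_notMem h.vT, h.hT]
  two := fun s hs hc => h.two' hM hs hc
  conn := fun s hs hc => h.conn' hM hs hc

/-- The faces produced by the bistellar move. -/
def bfaces (K : SComplex) (u v : ℕ) (T : Finset ℕ) : Finset (Finset ℕ) :=
  ((K.faces.filter fun α => ¬ ({u, v} : Finset ℕ) ⊆ α) ∪
      simplexFaces (insert u T)) ∪ simplexFaces (insert v T)

theorem BSetup.mem_bfaces {K : SComplex} {u v : ℕ} {T : Finset ℕ} (h : BSetup K u v T)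
    (α : Finset ℕ) : α ∈ bfaces K u v T ↔ BMem K u v T α := by
  have hTne : T.Nonempty := by rw [← Finset.card_pos, h.hT]; omega
  simp only [bfaces, simplexFaces, Finset.mem_union, Finset.mem_filter, Finset.mem_powerset,
    Finset.insert_subset_iff, Finset.singleton_subset_iff, ← Finset.nonempty_iff_ne_empty]
  constructor
  · rintro ((h1 | h1) | h1)
    · exact Or.inl h1
    · exact h.sub h1.2 h1.1
    · exact (h.symm.sub h1.2 h1.1).symm
  · rintro (h1 | rfl | rfl | rfl)
    · exact Or.inl (Or.inl h1)
    · exact Or.inl (Or.inr ⟨by simp, hTne⟩)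
    · exact Or.inl (Or.inr ⟨by simp, by simp⟩)
    · exact Or.inr ⟨by simp, by simp⟩

/-- The complex produced by the bistellar move. -/
def bist (K : SComplex) (u v : ℕ) (T : Finset ℕ) : SComplex where
  faces := bfaces K u v T
  not_empty_mem := by
    simp only [bfaces, simplexFaces, Finset.mem_union, Finset.mem_filter]
    rintro ((h1 | h1) | h1)
    · exact K.not_empty_mem h1.1
    · exact h1.2 rfl
    · exact h1.2 rfl
  down_closed := by
    intro s hs t hts ht
    simp only [bfaces, simplexFaces, Finset.mem_union, Finset.mem_filter, Finset.mem_powerset] at *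
    rcases hs with (h1 | h1) | h1
    · exact Or.inl (Or.inl ⟨K.down_closed s h1.1 t hts ht, fun hh => h1.2 (hh.trans hts)⟩)
    · exact Or.inl (Or.inr ⟨hts.trans h1.1, ht⟩)
    · exact Or.inr ⟨hts.trans h1.1, ht⟩

theorem BSetup.g2_lt {K K' : SComplex} {u v : ℕ} {T : Finset ℕ} (h : BSetup K u v T)
    (hM : ∀ α, α ∈ K'.faces ↔ BMem K u v T α) (huvK : ({u, v} : Finset ℕ) ∈ K.faces) :
    K'.g2 < K.g2 := by
  have huv := h.ne
  have cu : (insert u T).card = 4 := by rw [Finset.card_insert_of_notMem h.uT, h.hT]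
  have cv : (insert v T).card = 4 := by rw [Finset.card_insert_of_notMem h.vT, h.hT]
  have h0 : K.fnum 0 ≤ K'.fnum 0 := by
    refine Finset.card_le_card fun s hs => ?_
    rw [Finset.mem_filter] at hs ⊢
    refine ⟨(hM s).mpr (Or.inl ⟨hs.1, ?_⟩), hs.2⟩
    obtain ⟨x, rfl⟩ := Finset.card_eq_one.mp hs.2
    grind
  have h1 : K'.fnum 1 < K.fnum 1 := by
    refine Finset.card_lt_card ⟨fun s hs => ?_, fun hh => ?_⟩
    · rw [Finset.mem_filter] at hs ⊢
      refine ⟨?_, hs.2⟩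
      rcases (hM s).mp hs.1 with k | k | k | k
      · exact k.1
      · have := hs.2; rw [k, h.hT] at this; omega
      · have := hs.2; rw [k, cu] at this; omega
      · have := hs.2; rw [k, cv] at this; omega
    · have : ({u, v} : Finset ℕ) ∈ K'.faces.filter fun s => s.card = 1 + 1 :=
        hh (Finset.mem_filter.mpr ⟨huvK, Finset.card_pair huv⟩)
      exact h.notBoth ((hM _).mp (Finset.mem_filter.mp this).1) (by simp)
  unfold g2
  omega

theorem mem_lk_one (K : SComplex) (u : ℕ) (γ : Finset ℕ) :
    γ ∈ (K.lk {u}).faces ↔ γ.Nonempty ∧ u ∉ γ ∧ insert u γ ∈ K.faces := by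
  simp only [lk, Finset.mem_filter]
  have e : γ ∪ {u} = insert u γ := by grind
  rw [e]
  constructor
  · rintro ⟨h1, h2, h3⟩
    refine ⟨?_, ?_, h3⟩
    · rw [Finset.nonempty_iff_ne_empty]; rintro rfl; exact K.not_empty_mem h1
    · intro hu
      have : u ∈ γ ∩ {u} := by simp [hu]
      rw [h2] at this; simp at this
  · rintro ⟨h1, h2, h3⟩
    exact ⟨K.dc h3 (by simp) h1, by ext; simp; grind, h3⟩

theorem mem_lk_two (K : SComplex) (u v : ℕ) (γ : Finset ℕ) :
    γ ∈ (K.lk {u, v}).faces ↔ γ.Nonempty ∧ u ∉ γ ∧ v ∉ γ ∧ insert u (insert v γ) ∈ K.faces := by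
  simp only [lk, Finset.mem_filter]
  have e : γ ∪ {u, v} = insert u (insert v γ) := by grind
  rw [e]
  constructor
  · rintro ⟨h1, h2, h3⟩
    refine ⟨?_, ?_, ?_, h3⟩
    · rw [Finset.nonempty_iff_ne_empty]; rintro rfl; exact K.not_empty_mem h1
    · intro hu
      have : u ∈ γ ∩ {u, v} := by simp [hu]
      rw [h2] at this; simp at this
    · intro hu
      have : v ∈ γ ∩ {u, v} := by simp [hu]
      rw [h2] at this; simp at this
  · rintro ⟨h1, h2, h3, h4⟩
    exact ⟨K.dc h4 (by grind) h1, by ext; simp; grind, h4⟩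

/-- If the link of `uv` has at most three vertices, it is the boundary of a triangle. -/
theorem Good.small_link {K : SComplex} (h : K.Good) {u v : ℕ} (huv : u ≠ v)
    (huvK : insert u (insert v ∅) ∈ K.faces) (N : Finset ℕ)
    (hN : ∀ a, a ∈ N ↔ a ≠ u ∧ a ≠ v ∧ insert u (insert v {a}) ∈ K.faces) (hNc : N.card < 4) :
    N.card = 3 ∧ ∀ γ : Finset ℕ, u ∉ γ → v ∉ γ →
      (insert u (insert v γ) ∈ K.faces ↔ γ ⊆ N ∧ γ ≠ N) := by
  have nb : ∀ x ∈ N, ∃ y z, y ≠ z ∧ y ≠ x ∧ z ≠ x ∧ y ∈ N ∧ z ∈ N ∧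
      insert u (insert v {x, y}) ∈ K.faces ∧ insert u (insert v {x, z}) ∈ K.faces := by
    intro x hx
    have hx' := (hN x).mp hx
    obtain ⟨y, z, hyz, hy, hz, hh⟩ := h.two _ hx'.2.2 (by
      rw [Finset.card_insert_of_notMem (by grind), Finset.card_insert_of_notMem (by grind)]; rfl)
    have f : ∀ y, insert y (insert u (insert v ({x} : Finset ℕ))) = insert u (insert v {x, y}) := by
      intro y; grind
    have ky := (hh y hy).mpr (Or.inl rfl)
    have kz := (hh z hz).mpr (Or.inr rfl)
    refine ⟨y, z, hyz, by grind, by grind, (hN y).mpr ⟨by grind, by grind, ?_⟩,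
      (hN z).mpr ⟨by grind, by grind, ?_⟩, by rw [← f]; exact ky, by rw [← f]; exact kz⟩
    · exact K.dc ky (by grind) (by simp)
    · exact K.dc kz (by grind) (by simp)
  obtain ⟨F, hF, hsF, hFc⟩ := h.pure _ huvK
  obtain ⟨x, hxF, hx⟩ : ∃ x ∈ F, x ∉ insert u (insert v (∅ : Finset ℕ)) := by
    apply Finset.exists_mem_notMem_of_card_lt_card
    have := Finset.card_pair huv
    have e : (insert u (insert v (∅ : Finset ℕ))).card = 2 := this
    omega
  have hxN : x ∈ N := (hN x).mpr ⟨by grind, by grind, K.dc hF (by grind) (by simp)⟩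
  have c3 : ∀ x y z : ℕ, y ≠ z → y ≠ x → z ≠ x → ({x, y, z} : Finset ℕ).card = 3 := by
    intro x y z h1 h2 h3
    rw [Finset.card_eq_three]
    exact ⟨x, y, z, h2.symm, h3.symm, h1, rfl⟩
  have full : ∀ x ∈ N, ∀ y ∈ N, y ≠ x → insert u (insert v {x, y}) ∈ K.faces := by
    intro x hx t ht htx
    obtain ⟨y, z, h1, h2, h3, h4, h5, h6, h7⟩ := nb x hx
    have : ({x, y, z} : Finset ℕ) = N := Finset.eq_of_subset_of_card_le (by grind) (by
      rw [c3 x y z h1 h2 h3]; omega)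
    have ht' : t ∈ ({x, y, z} : Finset ℕ) := by rw [this]; exact ht
    simp only [Finset.mem_insert, Finset.mem_singleton] at ht'
    rcases ht' with rfl | rfl | rfl
    · exact absurd rfl htx
    · exact h6
    · exact h7
  have hN3 : N.card = 3 := by
    obtain ⟨y, z, h1, h2, h3, h4, h5, h6, h7⟩ := nb x hxN
    have : ({x, y, z} : Finset ℕ) ⊆ N := by grind
    have := Finset.card_le_card this
    rw [c3 x y z h1 h2 h3] at this
    omega
  refine ⟨hN3, fun γ hu hv => ⟨fun hk => ⟨fun a ha => ?_, ?_⟩, ?_⟩⟩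
  · exact (hN a).mpr ⟨by grind, by grind, K.dc hk (by grind) (by simp)⟩
  · rintro rfl
    have := h.dim _ hk
    rw [Finset.card_insert_of_notMem (by grind), Finset.card_insert_of_notMem hv] at this
    omega
  · rintro ⟨h1, h2⟩
    have hlt : γ.card < 3 := by
      rw [← hN3]; exact Finset.card_lt_card (lt_of_le_of_ne h1 h2)
    interval_cases hγ : γ.card
    · rw [Finset.card_eq_zero] at hγ
      subst hγ; exact huvK
    · obtain ⟨a, rfl⟩ := Finset.card_eq_one.mp hγ
      exact ((hN a).mp (h1 (by simp))).2.2
    · obtain ⟨a, b, hab, rfl⟩ := Finset.card_eq_two.mp hγ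
      exact full a (h1 (by simp)) b (h1 (by simp)) hab.symm

/-- Lemma 3.2: in the class `R`, for an edge `uv` with `v` non-singular,
`lk(u) ∩ lk(v) − lk(uv)` is nonempty. -/
theorem statement3 (K : SComplex) (u v : ℕ) (hK : InClassR K)
    (huv : ({u, v} : Finset ℕ) ∈ K.faces) (hne : u ≠ v)
    (hv : K.HasSphereLink 3 v) :
    ∃ γ, γ ∈ (K.lk {u}).faces ∧ γ ∈ (K.lk {v}).faces ∧ γ ∉ (K.lk {u, v}).faces := by
  obtain ⟨hnpm, -, -, hmiss, hmin⟩ := hK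
  have hg := good_of_npm hnpm
  by_contra hcon
  push Not at hcon
  have huv' : insert u (insert v ∅) ∈ K.faces := huv
  have hlc : ∀ γ : Finset ℕ, γ.Nonempty → u ∉ γ → v ∉ γ → insert u γ ∈ K.faces →
      insert v γ ∈ K.faces → insert u (insert v γ) ∈ K.faces := by
    intro γ h0 h1 h2 h3 h4
    exact ((K.mem_lk_two u v γ).mp (hcon γ ((K.mem_lk_one u γ).mpr ⟨h0, h1, h3⟩)
      ((K.mem_lk_one v γ).mpr ⟨h0, h2, h4⟩))).2.2.2
  let N : Finset ℕ := K.vertexSet.filter fun a =>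
    a ≠ u ∧ a ≠ v ∧ insert u (insert v {a}) ∈ K.faces
  have hvs : ∀ s ∈ K.faces, s ⊆ K.vertexSet := by
    intro s hs
    exact Finset.le_sup (f := id) hs
  have hN : ∀ a, a ∈ N ↔ a ≠ u ∧ a ≠ v ∧ insert u (insert v {a}) ∈ K.faces := by
    intro a
    simp only [N, Finset.mem_filter]
    exact ⟨fun h => h.2, fun h => ⟨hvs _ h.2.2 (by simp), h⟩⟩
  by_cases hNc : N.card < 4
  · obtain ⟨hN3, hlink⟩ := hg.small_link hne huv' N hN hNc
    have huN : u ∉ N := fun h => ((hN u).mp h).1 rfl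
    have hvN : v ∉ N := fun h => ((hN v).mp h).2.1 rfl
    have hNne : N.Nonempty := by rw [← Finset.card_pos]; omega
    have hNK : N ∉ K.faces := by
      intro hNK
      have side : ∀ x, (x = u ∨ x = v) → insert x N ∈ K.faces := by
        intro x hx
        have hxN : x ∉ N := by rcases hx with rfl | rfl <;> assumption
        apply hmiss
        · rw [Finset.card_insert_of_notMem hxN, hN3]
        · intro t ht
          simp only [properFaces, Finset.mem_filter, Finset.mem_powerset] at ht
          obtain ⟨hts, ht0, htne⟩ := ht
          have htn := Finset.nonempty_iff_ne_empty.mpr ht0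
          by_cases hxt : x ∈ t
          · have hp : t.erase x ≠ N := by
              intro e
              exact htne (by rw [← e, Finset.insert_erase hxt])
            have hsub : t.erase x ⊆ N := by
              intro z hz
              have := hts (Finset.mem_of_mem_erase hz)
              grind
            have := (hlink (t.erase x) (by grind) (by grind)).mpr ⟨hsub, hp⟩
            exact K.dc this (by grind) htn
          · exact K.dc hNK (by grind) htn
      have := (hlink N huN hvN).mp (hlc N hNne huN hvN (side u (Or.inl rfl)) (side v (Or.inr rfl)))
      exact this.2 rfl
    have hB : BSetup K u v N := ⟨hg, hne, hN3, huN, hvN, hNK, hlink⟩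
    have hM : ∀ α, α ∈ (bist K u v N).faces ↔ BMem K u v N α := hB.mem_bfaces
    have hle := hmin (bist K u v N) (npm_of_good (hB.good' hM)) (Or.inl ?_)
    · exact absurd (hB.g2_lt hM huv) (not_lt.mpr hle)
    · obtain ⟨a, b, c, _, _, _, hNe⟩ := Finset.card_eq_three.mp hN3
      refine ⟨u, v, a, b, c, huv, hne, ?_⟩
      rw [← hNe]
      refine ⟨hN3, huN, hvN, ?_, hNK, rfl⟩
      ext γ
      rw [mem_lk_two]
      simp only [properFaces, Finset.mem_filter, Finset.mem_powerset]
      constructor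
      · rintro ⟨h1, h2, h3, h4⟩
        have := (hlink γ h2 h3).mp h4
        exact ⟨this.1, Finset.nonempty_iff_ne_empty.mp h1, this.2⟩
      · rintro ⟨h1, h2, h3⟩
        have k1 : u ∉ γ := fun hh => huN (h1 hh)
        have k2 : v ∉ γ := fun hh => hvN (h1 hh)
        exact ⟨Finset.nonempty_iff_ne_empty.mpr h2, k1, k2, (hlink γ k1 k2).mpr ⟨h1, h3⟩⟩
  · obtain ⟨w, hw⟩ := Infinite.exists_notMem_finset K.vertexSet
    have hC : CSetup K u v w :=
      ⟨hg, hne, huv', fun s hs hws => hw (hvs s hs hws), hlc⟩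
    have hM : ∀ α, α ∈ (contr K u v w hC).faces ↔ CMem K u v w α := hC.mem_cfaces
    have hle := hmin (contr K u v w hC) (npm_of_good (hC.good' hM)) (Or.inr (Or.inl ?_))
    · have h0 := hC.fnum0 hM
      have h1 := hC.fnum1 hM N (fun a ha => (hN a).mp ha)
      unfold g2 at hle
      omega
    · refine ⟨u, v, huv, hne, ?_, w, hw, rfl⟩
      ext γ
      rw [Finset.mem_inter]
      constructor
      · rintro ⟨h1, h2⟩
        exact hcon γ h1 h2
      · intro h
        rw [mem_lk_two] at h
        rw [mem_lk_one, mem_lk_one]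
        exact ⟨⟨h.1, h.2.1, K.dc h.2.2.2 (by grind) (by simp)⟩,
          ⟨h.1, h.2.2.1, K.dc h.2.2.2 (by grind) (by simp)⟩⟩

end SComplex
end
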